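/- arXiv:2203.00816 — 2 statements merged into one kernel-verified Lean document; each statement's English description precedes it below -/
import Mathlib

section
/- Let n ≡ 1 (mod 8) with n ≥ 17. Then there exists a set of (n−1)/2 mutually orthogonal cyclic 4-cycle systems of the complete graph K_n; in particular, μ'(4,n) ≥ (n−1)/2. -/
/-- The edge set of the closed walk through `f 0, f 1, …, f (ℓ-1), f 0`. -/
def cycleEdges {V : Type*} [DecidableEq V] (ℓ : ℕ) (f : Fin ℓ → V) : Finset (Sym2 V) :=
  Finset.univ.image (fun i : Fin ℓ => s(f i, f ⟨(i.val + 1) % ℓ, Nat.mod_lt _ i.pos⟩))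

/-- `E` is the edge set of an `ℓ`-cycle. -/
def IsCycle {V : Type*} [DecidableEq V] (ℓ : ℕ) (E : Finset (Sym2 V)) : Prop :=
  ∃ f : Fin ℓ → V, Function.Injective f ∧ E = cycleEdges ℓ f

/-- `F` is an `ℓ`-cycle system of the complete graph on `V`: a set of `ℓ`-cycles whose
edge sets partition the edge set of the complete graph. -/
def IsCycleSystem {V : Type*} [DecidableEq V] (ℓ : ℕ) (F : Set (Finset (Sym2 V))) : Prop :=
  (∀ E ∈ F, IsCycle ℓ E) ∧
  F.Pairwise (fun E E' => Disjoint E E') ∧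
  (∀ e : Sym2 V, ¬ e.IsDiag ↔ ∃ E ∈ F, e ∈ E)

/-- Two cycle systems are orthogonal when any two cycles, one from each,
share at most one edge. -/
def Orthog {V : Type*} [DecidableEq V] (F F' : Set (Finset (Sym2 V))) : Prop :=
  ∀ E ∈ F, ∀ E' ∈ F', (E ∩ E').card ≤ 1

/-- Translation of a cycle (given by its edge set) by `g ∈ ZMod n`. -/
def translateCycle {n : ℕ} (g : ZMod n) (E : Finset (Sym2 (ZMod n))) : Finset (Sym2 (ZMod n)) :=
  E.image (Sym2.map (· + g))

/-- A cycle system of the complete graph on `ZMod n` is cyclic if closed under translation. -/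
def IsCyclicSystem {n : ℕ} (F : Set (Finset (Sym2 (ZMod n)))) : Prop :=
  ∀ E ∈ F, ∀ g : ZMod n, translateCycle g E ∈ F

/-- Signed differences. -/
def RR (m : ℕ) (d : ℤ) : Prop := d ≠ 0 ∧ -(m : ℤ) ≤ d ∧ d ≤ m

/-- `f d` is the signed difference following `d` in the cycle system. -/
structure Good (m : ℕ) (f : ℤ → ℤ) : Prop where
  rng : ∀ d, RR m d → RR m (f d)
  rev : ∀ d, RR m d → f (-f d) = -d
  sum : ∀ d, RR m d → d + f d + f (f d) + f (f (f d)) = 0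
  ne : ∀ d, RR m d → f d ≠ -d
  per : ∀ d, RR m d → f (f (f (f d))) = d

def Ort (m : ℕ) (f g : ℤ → ℤ) : Prop :=
  ∀ d, RR m d → f d ≠ g d ∧ f (f d) ≠ -g (g d)

def EE {n : ℕ} (f : ℤ → ℤ) (x : ZMod n) (d : ℤ) : Finset (Sym2 (ZMod n)) :=
  {s(x, x + d), s(x + d, x + ((d + f d : ℤ) : ZMod n)),
    s(x + ((d + f d : ℤ) : ZMod n), x + ((d + f d + f (f d) : ℤ) : ZMod n)),
    s(x + ((d + f d + f (f d) : ℤ) : ZMod n), x)}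

def FF (n m : ℕ) (f : ℤ → ℤ) : Set (Finset (Sym2 (ZMod n))) :=
  {E | ∃ (x : ZMod n) (d : ℤ), RR m d ∧ E = EE f x d}

theorem RR.neg {m : ℕ} {d : ℤ} (h : RR m d) : RR m (-d) := by
  unfold RR at *; omega

theorem cast_eq_iff {n : ℕ} (a b : ℤ) : ((a : ZMod n) = b) ↔ ∃ k : ℤ, b - a = n * k := by
  rw [ZMod.intCast_eq_intCast_iff_dvd_sub]; rfl

theorem zcast_inj {n m : ℕ} (hn : n = 2 * m + 1) {a b : ℤ} (h : (a : ZMod n) = b)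
    (h1 : -(2 * m : ℤ) ≤ b - a) (h2 : b - a ≤ 2 * m) : a = b := by
  rw [cast_eq_iff] at h
  obtain ⟨k, hk⟩ := h
  subst hn
  push_cast at hk
  rcases lt_trichotomy k 0 with h | h | h
  · nlinarith
  · subst h; simp at hk; omega
  · nlinarith

theorem cast_three {n m : ℕ} (hn : n = 2 * m + 1) {a b : ℤ} (h : (a : ZMod n) = b)
    (h1 : -(4 * m : ℤ) ≤ b - a) (h2 : b - a ≤ 4 * m) :
    b - a = 0 ∨ b - a = 2 * m + 1 ∨ b - a = -(2 * m + 1) := by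
  rw [cast_eq_iff] at h
  obtain ⟨k, hk⟩ := h
  subst hn
  push_cast at hk
  have h3 : k < 2 := by by_contra h; push Not at h; nlinarith
  have h4 : -2 < k := by by_contra h; push Not at h; nlinarith
  have : k = -1 ∨ k = 0 ∨ k = 1 := by omega
  rcases this with rfl | rfl | rfl <;> omega

theorem EE_rot {n m : ℕ} {f : ℤ → ℤ} (hf : Good m f) (x : ZMod n) (d : ℤ) (hd : RR m d) :
    EE f (x + (d : ZMod n)) (f d) = EE f x d := by
  have h1 := hf.sum d hd
  have e1 : x + (d : ZMod n) + (f d : ZMod n) = x + ((d + f d : ℤ) : ZMod n) := by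
    push_cast; ring
  have e2 : x + (d : ZMod n) + ((f d + f (f d) : ℤ) : ZMod n)
      = x + ((d + f d + f (f d) : ℤ) : ZMod n) := by
    push_cast; ring
  have e3 : x + (d : ZMod n) + ((f d + f (f d) + f (f (f d)) : ℤ) : ZMod n) = x := by
    have : f d + f (f d) + f (f (f d)) = -d := by omega
    rw [this]; push_cast; ring
  unfold EE
  rw [e1, e2, e3]
  ext e
  simp only [Finset.mem_insert, Finset.mem_singleton]
  tauto

theorem EE_rev {n m : ℕ} {f : ℤ → ℤ} (hf : Good m f) (x : ZMod n) (d : ℤ) (hd : RR m d) :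
    EE f (x + (d : ZMod n)) (-d) = EE f x d := by
  have h1 := hf.sum d hd
  have r1 := hf.rng d hd
  have r2 := hf.rng _ r1
  have r3 := hf.rng _ r2
  have a1 : f (-d) = - f (f (f d)) := by
    have := hf.rev _ r3
    rwa [hf.per d hd] at this
  have a2 : f (f (-d)) = - f (f d) := by
    rw [a1]; exact hf.rev _ r2
  have e0 : x + (d : ZMod n) + ((-d : ℤ) : ZMod n) = x := by push_cast; ring
  have e1 : x + (d : ZMod n) + ((-d + f (-d) : ℤ) : ZMod n)
      = x + ((d + f d + f (f d) : ℤ) : ZMod n) := by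
    rw [a1, show f (f (f d)) = -(d + f d + f (f d)) by omega]
    push_cast; ring
  have e2 : x + (d : ZMod n) + ((-d + f (-d) + f (f (-d)) : ℤ) : ZMod n)
      = x + ((d + f d : ℤ) : ZMod n) := by
    rw [a2, a1, show f (f (f d)) = -(d + f d + f (f d)) by omega]
    push_cast; ring
  unfold EE
  rw [e0, e1, e2]
  ext e
  simp only [Finset.mem_insert, Finset.mem_singleton]
  rw [Sym2.eq_swap (a := x + (d : ZMod n)) (b := x),
    Sym2.eq_swap (a := x) (b := x + ((d + f d + f (f d) : ℤ) : ZMod n)),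
    Sym2.eq_swap (b := x + ((d + f d : ℤ) : ZMod n)) (a := x + ((d + f d + f (f d) : ℤ) : ZMod n)),
    Sym2.eq_swap (a := x + ((d + f d : ℤ) : ZMod n)) (b := x + (d : ZMod n))]
  tauto

theorem EE_first {n : ℕ} (f : ℤ → ℤ) (x : ZMod n) (d : ℤ) : s(x, x + (d : ZMod n)) ∈ EE f x d := by
  simp [EE]

/-- Every edge of a cycle may serve as its first edge. -/
theorem EE_dart {n m : ℕ} {f : ℤ → ℤ} (hf : Good m f) (x : ZMod n) (d : ℤ) (hd : RR m d)
    (y z : ZMod n) (h : s(y, z) ∈ EE f x d) :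
    ∃ c : ℤ, RR m c ∧ z = y + c ∧ EE f y c = EE f x d := by
  have key : ∀ (x : ZMod n) (d : ℤ), RR m d → s(y, z) = s(x, x + (d : ZMod n)) →
      ∃ c : ℤ, RR m c ∧ z = y + c ∧ EE f y c = EE f x d := by
    intro x d hd h
    rw [Sym2.eq_iff] at h
    rcases h with ⟨rfl, rfl⟩ | ⟨rfl, rfl⟩
    · exact ⟨d, hd, rfl, rfl⟩
    · exact ⟨-d, hd.neg, by push_cast; ring, EE_rev hf _ _ hd⟩
  have h1 := hf.sum d hd
  have r1 := hf.rng d hd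
  have r2 := hf.rng _ r1
  have r3 := hf.rng _ r2
  have e1 := EE_rot hf x d hd
  have e2 := EE_rot hf (x + (d : ZMod n)) _ r1
  have e3 := EE_rot hf (x + (d : ZMod n) + (f d : ZMod n)) _ r2
  simp only [EE, Finset.mem_insert, Finset.mem_singleton] at h
  rcases h with h | h | h | h
  · exact key x d hd h
  · rw [← e1]; apply key _ _ r1; rw [h]; push_cast; ring_nf
  · rw [← e1, ← e2]; apply key _ _ r2; rw [h]; push_cast; ring_nf
  · rw [← e1, ← e2, ← e3]; apply key _ _ r3; rw [h]
    have : (x : ZMod n) = x + ((d + f d + f (f d) + f (f (f d)) : ℤ) : ZMod n) := by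
      rw [h1]; simp
    conv_lhs => rw [this]
    have h2 : x + ((d + f d + f (f d) + f (f (f d)) : ℤ) : ZMod n) + ((d + f d + f (f d) : ℤ) : ZMod n)
       = x + ((d + f d + f (f d) : ℤ) : ZMod n) := by rw [← this]
    rw [h2]; push_cast; ring_nf

theorem FF_isCycle {n m : ℕ} (hn : n = 2 * m + 1) {f : ℤ → ℤ} (hf : Good m f) (x : ZMod n) (d : ℤ)
    (hd : RR m d) : IsCycle 4 (EE f x d) := by
  refine ⟨![x, x + d, x + ((d + f d : ℤ) : ZMod n), x + ((d + f d + f (f d) : ℤ) : ZMod n)], ?_, ?_⟩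
  · have h1 := hf.sum d hd
    have r1 := hf.rng d hd
    have r2 := hf.rng _ r1
    have r3 := hf.rng _ r2
    have n1 := hf.ne d hd
    have n2 := hf.ne _ r1
    have n3 := hf.ne _ r2
    have n4 := hf.ne _ r3
    have key : ∀ a b : ℤ, a ≠ b → -(2 * m : ℤ) ≤ b - a → b - a ≤ 2 * m →
        x + (a : ZMod n) ≠ x + (b : ZMod n) := by
      intro a b hab h1 h2 h
      exact hab (zcast_inj hn (add_left_cancel h) h1 h2)
    unfold RR at hd r1 r2 r3
    have k01 := key 0 d (by omega) (by omega) (by omega)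
    have k02 := key 0 (d + f d) (by omega) (by omega) (by omega)
    have k03 := key 0 (d + f d + f (f d)) (by omega) (by omega) (by omega)
    have k12 := key d (d + f d) (by omega) (by omega) (by omega)
    have k13 := key d (d + f d + f (f d)) (by omega) (by omega) (by omega)
    have k23 := key (d + f d) (d + f d + f (f d)) (by omega) (by omega) (by omega)
    simp only [Int.cast_zero, add_zero] at k01 k02 k03
    intro i j hij
    fin_cases i <;> fin_cases j <;> first | rfl | (exfalso; revert hij; first | exact k01 | exact k02 | exact k03 | exact k12 | exact k13 | exact k23 | exact k01.symm | exact k02.symm | exact k03.symm | exact k12.symm | exact k13.symm | exact k23.symm)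
  · ext e
    simp only [EE, cycleEdges, Finset.mem_image, Finset.mem_univ, true_and, Finset.mem_insert,
      Finset.mem_singleton]
    constructor
    · rintro (h | h | h | h)
      · exact ⟨0, h.symm⟩
      · exact ⟨1, h.symm⟩
      · exact ⟨2, h.symm⟩
      · exact ⟨3, h.symm⟩
    · rintro ⟨i, h⟩
      fin_cases i
      · exact Or.inl h.symm
      · exact Or.inr (Or.inl h.symm)
      · exact Or.inr (Or.inr (Or.inl h.symm))
      · exact Or.inr (Or.inr (Or.inr h.symm))

theorem FF_cyclic {n m : ℕ} (f : ℤ → ℤ) : IsCyclicSystem (FF n m f) := by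
  rintro E ⟨x, d, hd, rfl⟩ g
  refine ⟨x + g, d, hd, ?_⟩
  unfold translateCycle EE
  simp only [Finset.image_insert, Finset.image_singleton, Sym2.map_mk]
  have : ∀ a : ZMod n, x + a + g = x + g + a := by intro a; ring
  simp only [this]

theorem exists_rep {n m : ℕ} (hn : n = 2 * m + 1) (c : ZMod n) (hc : c ≠ 0) :
    ∃ d : ℤ, RR m d ∧ (d : ZMod n) = c := by
  have : NeZero n := ⟨by omega⟩
  refine ⟨c.valMinAbs, ⟨?_, ?_⟩, ZMod.coe_valMinAbs c⟩
  · simpa using hc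
  · have := ZMod.valMinAbs_mem_Ioc c
    simp only [Set.mem_Ioc] at this
    omega

theorem FF_system {n m : ℕ} (hn : n = 2 * m + 1) {f : ℤ → ℤ} (hf : Good m f) :
    IsCycleSystem 4 (FF n m f) := by
  refine ⟨?_, ?_, ?_⟩
  · rintro E ⟨x, d, hd, rfl⟩
    exact FF_isCycle hn hf x d hd
  · rintro E ⟨x, d, hd, rfl⟩ E' ⟨x', d', hd', rfl⟩ hne
    rw [Finset.disjoint_left]
    intro e h h'
    apply hne
    induction e with | _ y z
    obtain ⟨c, hc, hz, h1⟩ := EE_dart hf x d hd y z h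
    obtain ⟨c', hc', hz', h1'⟩ := EE_dart hf x' d' hd' y z h'
    have : c = c' := by
      rw [hz] at hz'
      unfold RR at hc hc'
      exact zcast_inj hn (add_left_cancel hz') (by omega) (by omega)
    rw [← h1, ← h1', this]
  · intro e
    induction e with | _ y z
    rw [Sym2.mk_isDiag_iff]
    constructor
    · intro h
      obtain ⟨d, hd, hd'⟩ := exists_rep hn (z - y) (by rw [sub_ne_zero]; exact Ne.symm h)
      refine ⟨_, ⟨y, d, hd, rfl⟩, ?_⟩
      have := EE_first f y d
      rw [hd'] at this
      simpa using this
    · rintro ⟨E, ⟨x, d, hd, rfl⟩, h⟩ hyz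
      obtain ⟨c, hc, hz, h1⟩ := EE_dart hf x d hd y z h
      have : (0 : ZMod n) = c := by
        have : y + 0 = y + (c : ZMod n) := by rw [← hz, add_zero, hyz]
        exact add_left_cancel this
      have := zcast_inj (a := 0) hn (by simpa using this) (by unfold RR at hc; omega) (by unfold RR at hc; omega)
      exact hc.1 this.symm

set_option maxHeartbeats 1000000 in
theorem FF_orth {n m : ℕ} (hn : n = 2 * m + 1) {f g : ℤ → ℤ} (hf : Good m f) (hg : Good m g)
    (h : Ort m f g) : Orthog (FF n m f) (FF n m g) := by
  rintro E ⟨x, d, hd, rfl⟩ E' ⟨x', d', hd', rfl⟩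
  rw [Finset.card_le_one]
  intro a ha b hb
  rw [Finset.mem_inter] at ha hb
  obtain ⟨ha1, ha2⟩ := ha
  obtain ⟨hb1, hb2⟩ := hb
  induction a with | _ y z
  obtain ⟨c, hc, hz, h1⟩ := EE_dart hf x d hd y z ha1
  obtain ⟨c', hc', hz', h1'⟩ := EE_dart hg x' d' hd' y z ha2
  have : c = c' := by
    rw [hz] at hz'
    unfold RR at hc hc'
    exact zcast_inj hn (add_left_cancel hz') (by omega) (by omega)
  subst this
  rw [← h1] at hb1
  rw [← h1'] at hb2
  simp only [EE, Finset.mem_insert, Finset.mem_singleton] at hb1 hb2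
  rw [hz]
  clear h1 h1' ha1 ha2 hz hz' hd hd'
  have key : ∀ a b : ℤ, y + (a : ZMod n) = y + (b : ZMod n) → -(4 * m : ℤ) ≤ b - a → b - a ≤ 4 * m →
      b - a = 0 ∨ b - a = 2 * m + 1 ∨ b - a = -(2 * m + 1) := by
    intro a b hab h1 h2
    exact cast_three hn (add_left_cancel hab) h1 h2
  have s1 := hf.sum c hc
  have r1 := hf.rng c hc
  have r2 := hf.rng _ r1
  have r3 := hf.rng _ r2
  have n1 := hf.ne c hc
  have n2 := hf.ne _ r1
  have n3 := hf.ne _ r2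
  have n4 := hf.ne _ r3
  have s1' := hg.sum c hc
  have r1' := hg.rng c hc
  have r2' := hg.rng _ r1'
  have r3' := hg.rng _ r2'
  have n1' := hg.ne c hc
  have n2' := hg.ne _ r1'
  have n3' := hg.ne _ r2'
  have n4' := hg.ne _ r3'
  obtain ⟨o1, o2⟩ := h c hc
  have o3 : f (f (f c)) ≠ g (g (g c)) := by
    intro h3
    have := (h _ r3).1
    rw [hf.per c hc, h3, hg.per c hc] at this
    exact this rfl
  rw [hf.per c hc] at n4
  rw [hg.per c hc] at n4'
  unfold RR at hc r1 r2 r3 r1' r2' r3'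
  generalize f (f (f c)) = f3 at *
  generalize f (f c) = f2 at *
  generalize f c = f1 at *
  generalize g (g (g c)) = g3 at *
  generalize g (g c) = g2 at *
  generalize g c = g1 at *
  have hy : y = y + ((0 : ℤ) : ZMod n) := by simp
  have two : ∀ a b a' b' : ℤ, s(y + (a : ZMod n), y + (b : ZMod n)) =
      s(y + (a' : ZMod n), y + (b' : ZMod n)) →
      (-(2 * m : ℤ) ≤ a ∧ a ≤ 2 * m ∧ -(2 * m : ℤ) ≤ b ∧ b ≤ 2 * m) →
      (-(2 * m : ℤ) ≤ a' ∧ a' ≤ 2 * m ∧ -(2 * m : ℤ) ≤ b' ∧ b' ≤ 2 * m) →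
      ((a' - a = 0 ∨ a' - a = 2 * m + 1 ∨ a' - a = -(2 * m + 1)) ∧
        (b' - b = 0 ∨ b' - b = 2 * m + 1 ∨ b' - b = -(2 * m + 1))) ∨
      ((b' - a = 0 ∨ b' - a = 2 * m + 1 ∨ b' - a = -(2 * m + 1)) ∧
        (a' - b = 0 ∨ a' - b = 2 * m + 1 ∨ a' - b = -(2 * m + 1))) := by
    intro a b a' b' h hb1 hb2
    rw [Sym2.eq_iff] at h
    rcases h with ⟨h1, h2⟩ | ⟨h1, h2⟩
    · exact Or.inl ⟨key _ _ h1 (by omega) (by omega), key _ _ h2 (by omega) (by omega)⟩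
    · exact Or.inr ⟨key _ _ h1 (by omega) (by omega), key _ _ h2 (by omega) (by omega)⟩
  have e3 : c + f1 + f2 = -f3 := by omega
  have e3' : c + g1 + g2 = -g3 := by omega
  rw [e3] at hb1
  rw [e3'] at hb2
  rcases hb1 with hb1 | hb1 | hb1 | hb1
  · exact hb1.symm
  all_goals rcases hb2 with hb2 | hb2 | hb2 | hb2
  all_goals first
    | exact hb2.symm
    | (exfalso
       rw [hb1] at hb2
       clear hb1
       first
         | (have := two _ _ _ _ hb2 (by omega) (by omega); omega)
         | (rw [hy] at hb2; simp only [add_assoc, ← Int.cast_add, zero_add] at hb2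
            have := two _ _ _ _ hb2 (by omega) (by omega); omega))

set_option linter.unusedSimpArgs false
set_option linter.unusedVariables false

def ng (f : ℤ → ℤ) : ℤ → ℤ := fun d => -f (-d)

theorem Good.ng {m : ℕ} {f : ℤ → ℤ} (hf : Good m f) : Good m (ng f) := by
  constructor
  · intro d hd; exact (hf.rng _ hd.neg).neg
  · intro d hd
    have := hf.rev _ hd.neg
    simp only [_root_.ng, neg_neg] at *
    omega
  · intro d hd
    have := hf.sum _ hd.neg
    simp only [_root_.ng, neg_neg] at *
    omega
  · intro d hd
    have := hf.ne _ hd.neg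
    simp only [_root_.ng, neg_neg] at *
    omega
  · intro d hd
    have := hf.per _ hd.neg
    simp only [_root_.ng, neg_neg] at *
    omega

theorem ng_ng (f : ℤ → ℤ) : ng (ng f) = f := by
  funext d; simp [ng]

theorem Ort.symm {m : ℕ} {f g : ℤ → ℤ} (h : Ort m f g) : Ort m g f := by
  intro d hd
  have := h d hd
  omega

theorem Ort.ng {m : ℕ} {f g : ℤ → ℤ} (h : Ort m f g) : Ort m (ng f) (ng g) := by
  intro d hd
  have := h _ hd.neg
  simp only [_root_.ng, neg_neg] at *
  omega

/-- System attached to a fixed-point-free involution. -/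
def CC (p : ℕ → ℕ) (d : ℤ) : ℤ :=
  if 0 < d then
    (if d % 2 = 0 then -(2 * (p ((d - 1) / 2).toNat : ℤ) + 2) else 2 * (p ((d - 1) / 2).toNat : ℤ) + 2)
  else
    (if d % 2 = 0 then -(2 * (p ((-d - 1) / 2).toNat : ℤ) + 1) else 2 * (p ((-d - 1) / 2).toNat : ℤ) + 1)

theorem CC1 (p : ℕ → ℕ) (j : ℕ) : CC p (2 * j + 1) = 2 * p j + 2 := by
  have : ((2 * (j : ℤ) + 1 - 1) / 2).toNat = j := by omega
  unfold CC
  rw [if_pos (by omega), if_neg (by omega), this]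

theorem CC2 (p : ℕ → ℕ) (j : ℕ) : CC p (2 * j + 2) = -(2 * p j + 2) := by
  have : ((2 * (j : ℤ) + 2 - 1) / 2).toNat = j := by omega
  unfold CC
  rw [if_pos (by omega), if_pos (by omega), this]

theorem CC3 (p : ℕ → ℕ) (j : ℕ) : CC p (-(2 * j + 1)) = 2 * p j + 1 := by
  have : ((-(-(2 * (j : ℤ) + 1)) - 1) / 2).toNat = j := by omega
  unfold CC
  rw [if_neg (by omega), if_neg (by omega), this]

theorem CC4 (p : ℕ → ℕ) (j : ℕ) : CC p (-(2 * j + 2)) = -(2 * p j + 1) := by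
  have : ((-(-(2 * (j : ℤ) + 2)) - 1) / 2).toNat = j := by omega
  unfold CC
  rw [if_neg (by omega), if_pos (by omega), this]

theorem RR_cases {k : ℕ} {d : ℤ} (hd : RR (4 * k) d) : ∃ j : ℕ, j < 2 * k ∧
    (d = 2 * j + 1 ∨ d = 2 * j + 2 ∨ d = -(2 * j + 1) ∨ d = -(2 * j + 2)) := by
  unfold RR at hd
  refine ⟨(d.natAbs - 1) / 2, ?_, ?_⟩ <;> omega

theorem CC_good {k : ℕ} {p : ℕ → ℕ} (h1 : ∀ j < 2 * k, p j < 2 * k) (h2 : ∀ j < 2 * k, p (p j) = j)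
    (h3 : ∀ j < 2 * k, p j ≠ j) : Good (4 * k) (CC p) := by
  constructor
  all_goals
    intro d hd
    obtain ⟨j, hj, hd⟩ := RR_cases hd
    have a1 := h1 j hj
    have a2 := h2 j hj
    have a3 := h3 j hj
    rcases hd with rfl | rfl | rfl | rfl <;>
    simp only [CC1, CC2, CC3, CC4, neg_neg, a2, RR] <;> omega

theorem CC_ng {k : ℕ} {p : ℕ → ℕ} (h2 : ∀ j < 2 * k, p (p j) = j) : Ort (4 * k) (CC p) (ng (CC p)) := by
  intro d hd
  obtain ⟨j, hj, hd⟩ := RR_cases hd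
  have a2 := h2 j hj
  rcases hd with rfl | rfl | rfl | rfl <;>
    simp only [ng, CC1, CC2, CC3, CC4, neg_neg, a2] <;> omega

theorem CC_CC {k : ℕ} {p q : ℕ → ℕ} (h2 : ∀ j < 2 * k, p (p j) = j) (h2' : ∀ j < 2 * k, q (q j) = j)
    (h3 : ∀ j < 2 * k, p j ≠ q j) :
    Ort (4 * k) (CC p) (CC q) ∧ Ort (4 * k) (CC p) (ng (CC q)) := by
  constructor
  all_goals
    intro d hd
    obtain ⟨j, hj, hd⟩ := RR_cases hd
    have a1 := h2 j hj
    have a2 := h2' j hj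
    have a3 := h3 j hj
    rcases hd with rfl | rfl | rfl | rfl <;>
    simp only [ng, CC1, CC2, CC3, CC4, neg_neg, a1, a2] <;> omega

def BB (d : ℤ) : ℤ :=
  if 0 < d then
    (if d % 4 = 1 then -(d + 1) else if d % 4 = 2 then -(d - 1) else if d % 4 = 3 then d - 1 else d - 3)
  else
    (if (-d) % 4 = 1 then d - 3 else if (-d) % 4 = 2 then d - 1 else if (-d) % 4 = 3 then -d + 1
      else -d - 1)

def DD (m : ℤ) (d : ℤ) : ℤ :=
  if 0 < d then
    (if d % 4 = 1 then -(d + 2) else if d % 4 = 2 then -(d + 2) else if d % 4 = 3 then -(d - 2)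
      else -(d - 2))
  else
    (if (-d) % 4 = 1 then (if -d + 3 = m then 2 else -d + 5)
      else if (-d) % 4 = 2 then (if -d = 2 then m - 3 else -d - 5)
      else if (-d) % 4 = 3 then (if -d + 1 = m then 4 else -d + 5)
      else (if -d = 4 then m - 1 else -d - 5))

theorem RR_cases4 {k : ℕ} {d : ℤ} (hd : RR (4 * k) d) : ∃ q : ℕ, q < k ∧
    (d = 4 * q + 1 ∨ d = 4 * q + 2 ∨ d = 4 * q + 3 ∨ d = 4 * q + 4 ∨
     d = -(4 * q + 1) ∨ d = -(4 * q + 2) ∨ d = -(4 * q + 3) ∨ d = -(4 * q + 4)) := by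
  unfold RR at hd
  refine ⟨(d.natAbs - 1) / 4, ?_, ?_⟩ <;> omega

theorem BB1 (q : ℕ) : BB (4 * q + 1) = -(4 * q + 2) := by unfold BB; split_ifs <;> omega
theorem BB2 (q : ℕ) : BB (4 * q + 2) = -(4 * q + 1) := by unfold BB; split_ifs <;> omega
theorem BB3 (q : ℕ) : BB (4 * q + 3) = 4 * q + 2 := by unfold BB; split_ifs <;> omega
theorem BB4 (q : ℕ) : BB (4 * q + 4) = 4 * q + 1 := by unfold BB; split_ifs <;> omega
theorem BB5 (q : ℕ) : BB (-(4 * q + 1)) = -(4 * q + 4) := by unfold BB; split_ifs <;> omega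
theorem BB6 (q : ℕ) : BB (-(4 * q + 2)) = -(4 * q + 3) := by unfold BB; split_ifs <;> omega
theorem BB7 (q : ℕ) : BB (-(4 * q + 3)) = 4 * q + 4 := by unfold BB; split_ifs <;> omega
theorem BB8 (q : ℕ) : BB (-(4 * q + 4)) = 4 * q + 3 := by unfold BB; split_ifs <;> omega

/-- next and previous block -/
def nx (k q : ℕ) : ℕ := if q + 1 = k then 0 else q + 1
def pv (k q : ℕ) : ℕ := if q = 0 then k - 1 else q - 1

theorem nx_pv {k q : ℕ} (hq : q < k) : nx k (pv k q) = q := by unfold nx pv; split_ifs <;> omega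
theorem pv_nx {k q : ℕ} (hq : q < k) : pv k (nx k q) = q := by
  unfold nx
  split_ifs with h
  · simp [pv]; omega
  · simp [pv]
theorem nx_lt {k q : ℕ} (hq : q < k) : nx k q < k := by unfold nx; split_ifs <;> omega
theorem pv_lt {k q : ℕ} (hq : q < k) : pv k q < k := by unfold pv; split_ifs <;> omega
theorem nx_ne {k q : ℕ} (hk : 2 ≤ k) (hq : q < k) : nx k q ≠ q := by unfold nx; split_ifs <;> omega
theorem pv_ne {k q : ℕ} (hk : 2 ≤ k) (hq : q < k) : pv k q ≠ q := by unfold pv; split_ifs <;> omega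

theorem DD1 (k q : ℕ) : DD (4 * k) (4 * q + 1) = -(4 * q + 3) := by
  unfold DD; split_ifs <;> omega
theorem DD2 (k q : ℕ) : DD (4 * k) (4 * q + 2) = -(4 * q + 4) := by
  unfold DD; split_ifs <;> omega
theorem DD3 (k q : ℕ) : DD (4 * k) (4 * q + 3) = -(4 * q + 1) := by
  unfold DD; split_ifs <;> omega
theorem DD4 (k q : ℕ) : DD (4 * k) (4 * q + 4) = -(4 * q + 2) := by
  unfold DD; split_ifs <;> omega
theorem DD5 {k q : ℕ} (hq : q < k) : DD (4 * k) (-(4 * q + 1)) = 4 * nx k q + 2 := by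
  unfold DD nx; split_ifs <;> omega
theorem DD6 {k q : ℕ} (hq : q < k) : DD (4 * k) (-(4 * q + 2)) = 4 * pv k q + 1 := by
  unfold DD pv; split_ifs <;> omega
theorem DD7 {k q : ℕ} (hq : q < k) : DD (4 * k) (-(4 * q + 3)) = 4 * nx k q + 4 := by
  unfold DD nx; split_ifs <;> omega
theorem DD8 {k q : ℕ} (hq : q < k) : DD (4 * k) (-(4 * q + 4)) = 4 * pv k q + 3 := by
  unfold DD pv; split_ifs <;> omega

theorem BB_good (k : ℕ) : Good (4 * k) BB := by
  constructor
  all_goals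
    intro d hd
    obtain ⟨q, hq, hd⟩ := RR_cases4 hd
    rcases hd with rfl | rfl | rfl | rfl | rfl | rfl | rfl | rfl <;>
    simp only [BB1, BB2, BB3, BB4, BB5, BB6, BB7, BB8, neg_neg, RR] <;> omega

theorem BB_ng (k : ℕ) : Ort (4 * k) BB (ng BB) := by
  intro d hd
  obtain ⟨q, hq, hd⟩ := RR_cases4 hd
  rcases hd with rfl | rfl | rfl | rfl | rfl | rfl | rfl | rfl <;>
    simp only [ng, BB1, BB2, BB3, BB4, BB5, BB6, BB7, BB8, neg_neg] <;> omega

theorem DD_good {k : ℕ} (hk : 2 ≤ k) : Good (4 * k) (DD (4 * k)) := by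
  constructor
  all_goals
    intro d hd
    obtain ⟨q, hq, hd⟩ := RR_cases4 hd
    have a1 := nx_lt hq
    have a2 := pv_lt hq
    rcases hd with rfl | rfl | rfl | rfl | rfl | rfl | rfl | rfl <;>
    simp only [DD1, DD2, DD3, DD4, DD5 hq, DD6 hq, DD7 hq, DD8 hq, DD5 a1, DD6 a1, DD7 a1, DD8 a1,
      DD5 a2, DD6 a2, DD7 a2, DD8 a2, nx_pv hq, pv_nx hq, neg_neg, RR] <;> omega

theorem DD_ng {k : ℕ} (hk : 2 ≤ k) : Ort (4 * k) (DD (4 * k)) (ng (DD (4 * k))) := by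
  intro d hd
  obtain ⟨q, hq, hd⟩ := RR_cases4 hd
  have a1 := nx_lt hq
  have a2 := pv_lt hq
  rcases hd with rfl | rfl | rfl | rfl | rfl | rfl | rfl | rfl <;>
    simp only [ng, DD1, DD2, DD3, DD4, DD5 hq, DD6 hq, DD7 hq, DD8 hq, DD5 a1, DD6 a1, DD7 a1, DD8 a1,
      DD5 a2, DD6 a2, DD7 a2, DD8 a2, nx_pv hq, pv_nx hq, neg_neg, RR] <;> omega

theorem BB_DD {k : ℕ} (hk : 2 ≤ k) :
    Ort (4 * k) BB (DD (4 * k)) ∧ Ort (4 * k) BB (ng (DD (4 * k))) := by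
  constructor
  all_goals
    intro d hd
    obtain ⟨q, hq, hd⟩ := RR_cases4 hd
    have a1 := nx_lt hq
    have a2 := pv_lt hq
    have a3 := nx_ne hk hq
    have a4 := pv_ne hk hq
    rcases hd with rfl | rfl | rfl | rfl | rfl | rfl | rfl | rfl <;>
    simp only [ng, BB1, BB2, BB3, BB4, BB5, BB6, BB7, BB8,
      DD1, DD2, DD3, DD4, DD5 hq, DD6 hq, DD7 hq, DD8 hq, DD5 a1, DD6 a1, DD7 a1, DD8 a1,
      DD5 a2, DD6 a2, DD7 a2, DD8 a2, nx_pv hq, pv_nx hq, neg_neg, RR] <;> omega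

/-- Values of `CC` in terms of blocks of four. -/
theorem CC_eval (p : ℕ → ℕ) (q : ℕ) :
    CC p (4 * q + 1) = 2 * p (2 * q) + 2 ∧ CC p (4 * q + 2) = -(2 * p (2 * q) + 2) ∧
    CC p (4 * q + 3) = 2 * p (2 * q + 1) + 2 ∧ CC p (4 * q + 4) = -(2 * p (2 * q + 1) + 2) ∧
    CC p (-(4 * q + 1)) = 2 * p (2 * q) + 1 ∧ CC p (-(4 * q + 2)) = -(2 * p (2 * q) + 1) ∧
    CC p (-(4 * q + 3)) = 2 * p (2 * q + 1) + 1 ∧ CC p (-(4 * q + 4)) = -(2 * p (2 * q + 1) + 1) := by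
  have e1 := CC1 p (2 * q)
  have e2 := CC2 p (2 * q)
  have e3 := CC3 p (2 * q)
  have e4 := CC4 p (2 * q)
  have e5 := CC1 p (2 * q + 1)
  have e6 := CC2 p (2 * q + 1)
  have e7 := CC3 p (2 * q + 1)
  have e8 := CC4 p (2 * q + 1)
  push_cast at *
  ring_nf at *
  simp [*]

theorem CC_BB {k : ℕ} {p : ℕ → ℕ} (h2 : ∀ j < 2 * k, p (p j) = j)
    (h3 : ∀ j < 2 * k, p j ≠ j) (h4 : ∀ q < k, p (2 * q) ≠ 2 * q + 1 ∧ p (2 * q + 1) ≠ 2 * q) :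
    Ort (4 * k) BB (CC p) ∧ Ort (4 * k) BB (ng (CC p)) := by
  constructor
  all_goals
    intro d hd
    obtain ⟨q, hq, hd⟩ := RR_cases4 hd
    have a1 := h2 (2 * q) (by omega)
    have a2 := h2 (2 * q + 1) (by omega)
    have a3 := h3 (2 * q) (by omega)
    have a4 := h3 (2 * q + 1) (by omega)
    have a5 := h4 q hq
    obtain ⟨c1, c2, c3, c4, c5, c6, c7, c8⟩ := CC_eval p q
    rcases hd with rfl | rfl | rfl | rfl | rfl | rfl | rfl | rfl <;>
    simp only [ng, BB1, BB2, BB3, BB4, BB5, BB6, BB7, BB8, c1, c2, c3, c4, c5, c6, c7, c8,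
      CC1, CC2, CC3, CC4, a1, a2, neg_neg] <;> omega

theorem CC_DD {k : ℕ} (hk : 2 ≤ k) {p : ℕ → ℕ} (h2 : ∀ j < 2 * k, p (p j) = j)
    (h3 : ∀ j < 2 * k, p j ≠ j) (h4 : ∀ q < k, p (2 * q) ≠ 2 * q + 1 ∧ p (2 * q + 1) ≠ 2 * q) :
    Ort (4 * k) (DD (4 * k)) (CC p) ∧ Ort (4 * k) (DD (4 * k)) (ng (CC p)) := by
  constructor
  all_goals
    intro d hd
    obtain ⟨q, hq, hd⟩ := RR_cases4 hd
    have a1 := h2 (2 * q) (by omega)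
    have a2 := h2 (2 * q + 1) (by omega)
    have a3 := h3 (2 * q) (by omega)
    have a4 := h3 (2 * q + 1) (by omega)
    have a5 := h4 q hq
    have b1 := nx_lt hq
    have b2 := pv_lt hq
    have b3 := nx_ne hk hq
    have b4 := pv_ne hk hq
    obtain ⟨c1, c2, c3, c4, c5, c6, c7, c8⟩ := CC_eval p q
    rcases hd with rfl | rfl | rfl | rfl | rfl | rfl | rfl | rfl <;>
    simp only [ng, DD1, DD2, DD3, DD4, DD5 hq, DD6 hq, DD7 hq, DD8 hq, DD5 b1, DD6 b1, DD7 b1, DD8 b1,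
      DD5 b2, DD6 b2, DD7 b2, DD8 b2, nx_pv hq, pv_nx hq, c1, c2, c3, c4, c5, c6, c7, c8,
      CC1, CC2, CC3, CC4, a1, a2, neg_neg] <;> omega

/-- The standard one-factorization. -/
def rho {N : ℕ} (t : ZMod N) : Option (ZMod N) → Option (ZMod N)
  | none => some t
  | some x => if x = t then none else some (2 * t - x)

theorem two_cancel {N k : ℕ} (hN : N + 1 = 2 * k) (a : ZMod N) (h : 2 * a = 0) : a = 0 := by
  have h1 : ((N + 1 : ℕ) : ZMod N) = ((2 * k : ℕ) : ZMod N) := by rw [hN]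
  push_cast at h1
  rw [ZMod.natCast_self, zero_add] at h1
  calc a = 1 * a := by ring
    _ = k * (2 * a) := by rw [h1]; ring
    _ = 0 := by rw [h, mul_zero]

theorem rho_rho {N : ℕ} (t : ZMod N) (x : Option (ZMod N)) : rho t (rho t x) = x := by
  cases x with
  | none => simp [rho]
  | some x =>
    by_cases h : x = t
    · simp [rho, h]
    · have : 2 * t - x ≠ t := by
        intro h'
        apply h
        linear_combination -h'
      simp [rho, h, this]

theorem rho_ne {N k : ℕ} (hN : N + 1 = 2 * k) (t : ZMod N) (x : Option (ZMod N)) : rho t x ≠ x := by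
  cases x with
  | none => simp [rho]
  | some x =>
    by_cases h : x = t
    · simp [rho, h]
    · simp only [rho, h, if_false, ne_eq, Option.some.injEq]
      intro h'
      apply h
      have := two_cancel hN (x - t) (by linear_combination -h')
      linear_combination this

theorem rho_inj {N k : ℕ} (hN : N + 1 = 2 * k) {t u : ZMod N} (htu : t ≠ u) (x : Option (ZMod N)) :
    rho t x ≠ rho u x := by
  cases x with
  | none => simpa [rho] using htu
  | some x =>
    simp only [rho]
    split_ifs with h1 h2 h2
    · exact absurd (h1.symm.trans h2) htu
    · simp
    · simp
    · simp only [ne_eq, Option.some.injEq]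
      intro h'
      apply htu
      have := two_cancel hN (t - u) (by linear_combination h')
      linear_combination this

def lab (N : ℕ) (j : ℕ) : Option (ZMod N) :=
  if j = 0 then none else
    some (((if j % 2 = 1 then -(((j - 1) / 2 : ℕ) : ℤ) else ((j / 2 : ℕ) : ℤ)) : ℤ) : ZMod N)

theorem lab_inj {N k : ℕ} (hN : N + 1 = 2 * k) {i j : ℕ} (hi : i < 2 * k) (hj : j < 2 * k)
    (h : lab N i = lab N j) : i = j := by
  unfold lab at h
  split_ifs at h with h1 h2 h3 h4 h5
  · omega
  all_goals
    have := zcast_inj (m := k - 1) (by omega) (Option.some.inj h) (by omega) (by omega)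
    omega

theorem lab_rho {N k q : ℕ} (hN : N + 1 = 2 * k) (hq' : q < k) : rho 0 (lab N (2 * q)) = lab N (2 * q + 1) := by
  rcases Nat.eq_zero_or_pos q with rfl | hq
  · simp [lab, rho]
  · have h1 : (2 * q + 1) % 2 = 1 := by omega
    have h2 : 2 * q ≠ 0 := by omega
    have h3 : (2 * q) % 2 ≠ 1 := by omega
    have h4 : 2 * q + 1 ≠ 0 := by omega
    unfold lab
    rw [if_neg h2, if_neg h3, if_neg h4, if_pos h1]
    have e1 : 2 * q / 2 = q := by omega
    have e2 : (2 * q + 1 - 1) / 2 = q := by omega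
    rw [e1, e2]
    by_cases h : ((q : ℤ) : ZMod N) = 0
    · have := zcast_inj (n := N) (m := k - 1) (a := q) (b := 0) (by omega) (by simpa using h) (by omega) (by omega)
      omega
    · simp only [rho, h, if_false]; push_cast; ring_nf

theorem exists_factors {N k : ℕ} (hk : 2 ≤ k) (hN : N + 1 = 2 * k) : ∃ p : ZMod N → ℕ → ℕ,
    (∀ t, ∀ j < 2 * k, p t j < 2 * k) ∧ (∀ t, ∀ j < 2 * k, p t (p t j) = j) ∧
    (∀ t, ∀ j < 2 * k, p t j ≠ j) ∧ (∀ t u, t ≠ u → ∀ j < 2 * k, p t j ≠ p u j) ∧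
    (∀ q < k, p 0 (2 * q) = 2 * q + 1 ∧ p 0 (2 * q + 1) = 2 * q) := by
  have : NeZero N := ⟨by omega⟩
  have hb : Function.Bijective (fun j : Fin (2 * k) => lab N j) := by
    rw [Fintype.bijective_iff_injective_and_card]
    constructor
    · intro i j h
      exact Fin.ext (lab_inj hN i.2 j.2 h)
    · simp [ZMod.card]; omega
  let e := Equiv.ofBijective _ hb
  have he : ∀ j : Fin (2 * k), e j = lab N j := fun j => rfl
  let p : ZMod N → ℕ → ℕ := fun t j =>
    if h : j < 2 * k then ((e.symm (rho t (e ⟨j, h⟩)) : Fin (2 * k)) : ℕ) else j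
  have hp : ∀ t j (h : j < 2 * k), p t j = ((e.symm (rho t (e ⟨j, h⟩)) : Fin (2 * k)) : ℕ) := by
    intro t j h; simp only [p, dif_pos h]
  have hlt : ∀ t, ∀ j < 2 * k, p t j < 2 * k := by
    intro t j h; rw [hp t j h]; exact Fin.is_lt _
  have hinv : ∀ t, ∀ j < 2 * k, p t (p t j) = j := by
    intro t j h
    rw [hp t _ (hlt t j h)]
    have : (⟨p t j, hlt t j h⟩ : Fin (2 * k)) = e.symm (rho t (e ⟨j, h⟩)) := Fin.ext (hp t j h)
    rw [this, Equiv.apply_symm_apply, rho_rho, Equiv.symm_apply_apply]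
  refine ⟨p, hlt, hinv, ?_, ?_, ?_⟩
  · intro t j h h'
    rw [hp t j h] at h'
    have h2 : e.symm (rho t (e ⟨j, h⟩)) = ⟨j, h⟩ := Fin.ext h'
    rw [Equiv.symm_apply_eq] at h2
    exact rho_ne hN _ _ h2
  · intro t u htu j h h'
    rw [hp t j h, hp u j h] at h'
    exact rho_inj hN htu _ (e.symm.injective (Fin.ext h'))
  · intro q hq
    have h1 : p 0 (2 * q) = 2 * q + 1 := by
      rw [hp 0 _ (by omega)]
      have : e.symm (rho 0 (e ⟨2 * q, by omega⟩)) = ⟨2 * q + 1, by omega⟩ := by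
        rw [Equiv.symm_apply_eq, he, he]
        exact lab_rho hN hq
      rw [this]
    refine ⟨h1, ?_⟩
    rw [← h1]
    exact hinv 0 _ (by omega)

def base {N : ℕ} (k : ℕ) (p : ZMod N → ℕ → ℕ) : Option (ZMod N) → ℤ → ℤ
  | none => DD (4 * k)
  | some t => if t = 0 then BB else CC (p t)

def sys {N : ℕ} (k : ℕ) (p : ZMod N → ℕ → ℕ) (i : Option (ZMod N) × Bool) : ℤ → ℤ :=
  if i.2 then ng (base k p i.1) else base k p i.1

def Ort2 (m : ℕ) (f g : ℤ → ℤ) : Prop := Ort m f g ∧ Ort m f (ng g)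

theorem Ort2.symm {m : ℕ} {f g : ℤ → ℤ} (h : Ort2 m f g) : Ort2 m g f := by
  refine ⟨h.1.symm, ?_⟩
  have := h.2.ng
  rw [ng_ng] at this
  exact this.symm

theorem FF_ne {n m : ℕ} (hn : n = 2 * m + 1) (hm : 1 ≤ m) {f g : ℤ → ℤ} (hf : Good m f)
    (hg : Good m g) (h : Ort m f g) : FF n m f ≠ FF n m g := by
  intro he
  have ho := FF_orth hn hf hg h
  rw [← he] at ho
  have h1 : RR m 1 := by unfold RR; omega
  have hmem : EE f (0 : ZMod n) 1 ∈ FF n m f := ⟨0, 1, h1, rfl⟩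
  have hc := ho _ hmem _ hmem
  rw [Finset.inter_self, Finset.card_le_one] at hc
  have hh := hc _ (EE_first f 0 1) s((0 : ZMod n) + ((1 : ℤ) : ZMod n), 0 + ((1 + f 1 : ℤ) : ZMod n))
    (by simp [EE])
  have r1 := hf.rng 1 h1
  have n1 := hf.ne 1 h1
  unfold RR at h1 r1
  rw [Sym2.eq_iff] at hh
  simp only [zero_add] at hh
  rcases hh with ⟨h2, -⟩ | ⟨h2, -⟩
  · have := zcast_inj (a := 0) (b := 1) hn (by simpa using h2) (by omega) (by omega)
    omega
  · have := zcast_inj (a := 0) (b := 1 + f 1) hn (by simpa using h2) (by omega) (by omega)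
    omega

/-- If `n ≡ 1 (mod 8)` and `n ≥ 17`, then there exists a set of `(n-1)/2` mutually
orthogonal cyclic 4-cycle systems of `K_n`; in particular `μ'(4, n) ≥ (n-1)/2`. -/
theorem stmt_0 (n : ℕ) (hn : n % 8 = 1) (hn17 : 17 ≤ n) :
    ∃ S : Set (Set (Finset (Sym2 (ZMod n)))),
      (∀ F ∈ S, IsCycleSystem 4 F ∧ IsCyclicSystem F) ∧
      S.Pairwise Orthog ∧
      S.ncard = (n - 1) / 2 := by
  obtain ⟨k, rfl⟩ : ∃ k, n = 2 * (4 * k) + 1 := ⟨n / 8, by omega⟩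
  have hk : 2 ≤ k := by omega
  obtain ⟨N, hN⟩ : ∃ N, N + 1 = 2 * k := ⟨2 * k - 1, by omega⟩
  have : NeZero N := ⟨by omega⟩
  obtain ⟨p, p1, p2, p3, p4, p5⟩ := exists_factors hk hN
  have p6 : ∀ t : ZMod N, t ≠ 0 →
      ∀ q < k, p t (2 * q) ≠ 2 * q + 1 ∧ p t (2 * q + 1) ≠ 2 * q := by
    intro t ht q hq
    have h1 := p4 t 0 ht (2 * q) (by omega)
    have h2 := p4 t 0 ht (2 * q + 1) (by omega)
    rw [(p5 q hq).1] at h1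
    rw [(p5 q hq).2] at h2
    exact ⟨h1, h2⟩
  have gbase : ∀ a, Good (4 * k) (base k p a) := by
    intro a
    cases a with
    | none => exact DD_good hk
    | some t =>
      simp only [base]
      split_ifs
      · exact BB_good k
      · exact CC_good (p1 t) (p2 t) (p3 t)
  have nbase : ∀ a, Ort (4 * k) (base k p a) (ng (base k p a)) := by
    intro a
    cases a with
    | none => exact DD_ng hk
    | some t =>
      simp only [base]
      split_ifs
      · exact BB_ng k
      · exact CC_ng (p2 t)
  have dsome : ∀ t, Ort2 (4 * k) (base k p none) (base k p (some t)) := by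
    intro t
    simp only [base]
    split_ifs with h
    · exact Ort2.symm (BB_DD hk)
    · exact CC_DD hk (p2 t) (p3 t) (p6 t h)
  have obase : ∀ a b, a ≠ b → Ort2 (4 * k) (base k p a) (base k p b) := by
    intro a b hab
    cases a with
    | none =>
      cases b with
      | none => exact absurd rfl hab
      | some u => exact dsome u
    | some t =>
      cases b with
      | none => exact (dsome t).symm
      | some u =>
        have htu : t ≠ u := fun h => hab (by rw [h])
        simp only [base]
        split_ifs with h1 h2 h2
        · exact absurd (h1.trans h2.symm) htu
        · exact CC_BB (p2 u) (p3 u) (p6 u h2)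
        · exact Ort2.symm (CC_BB (p2 t) (p3 t) (p6 t h1))
        · exact CC_CC (p2 t) (p2 u) (p4 t u htu)
  have gsys : ∀ i, Good (4 * k) (sys k p i) := by
    intro i
    unfold sys
    split_ifs
    · exact (gbase _).ng
    · exact gbase _
  have osys : ∀ i j, i ≠ j → Ort (4 * k) (sys k p i) (sys k p j) := by
    rintro ⟨a, x⟩ ⟨b, y⟩ hij
    by_cases hab : a = b
    · subst hab
      have hxy : x ≠ y := fun h => hij (by rw [h])
      cases x <;> cases y
      · exact absurd rfl hxy
      · simpa [sys] using nbase a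
      · simpa [sys] using (nbase a).symm
      · exact absurd rfl hxy
    · have h1 := obase a b hab
      have h2 := obase b a (Ne.symm hab)
      cases x <;> cases y
      · simpa [sys] using h1.1
      · simpa [sys] using h1.2
      · simpa [sys] using h2.2.symm
      · simpa [sys] using h1.1.ng
  have hinj : Function.Injective (fun i => FF (2 * (4 * k) + 1) (4 * k) (sys k p i)) := by
    intro i j h
    by_contra hij
    exact FF_ne rfl (by omega) (gsys i) (gsys j) (osys i j hij) h
  refine ⟨Set.range (fun i => FF (2 * (4 * k) + 1) (4 * k) (sys k p i)), ?_, ?_, ?_⟩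
  · rintro F ⟨i, rfl⟩
    exact ⟨FF_system rfl (gsys i), FF_cyclic _⟩
  · rintro F ⟨i, rfl⟩ F' ⟨j, rfl⟩ hne
    have hij : i ≠ j := fun h => hne (by rw [h])
    exact FF_orth rfl (gsys i) (gsys j) (osys i j hij)
  · rw [← Set.image_univ, Set.ncard_image_of_injective _ hinj, Set.ncard_univ,
      Nat.card_eq_fintype_card, Fintype.card_prod, Fintype.card_option, ZMod.card, Fintype.card_bool]
    omega
end

section
/- Let ℓ ≥ 4 be even, let n ≡ 1 (mod 2ℓ) and set N = (n−1)/(2ℓ). Then there exists a set of mutually orthogonal cyclic ℓ-cycle systems of K_n of cardinality at least N/(aℓ+b) − 1, where (a,b) = (4,−2) if ℓ ≡ 0 (mod 4) and (a,b) = (24,−18) if ℓ ≡ 2 (mod 4). In particular μ(ℓ,n) ≥ μ'(ℓ,n) ≥ N/(aℓ+b) − 1. -/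
/-- edge number `k` of the closed walk with vertices `v`, translated by `g` -/
def edgeAt (n : ℕ) (v : ℕ → ℤ) (g : ZMod n) (k : ℕ) : Sym2 (ZMod n) :=
  s((v k : ZMod n) + g, (v (k + 1) : ZMod n) + g)

/-- the translated cycle -/
def cyc (ℓ n : ℕ) (v : ℕ → ℤ) (g : ZMod n) : Finset (Sym2 (ZMod n)) :=
  cycleEdges ℓ (fun k : Fin ℓ => (v k : ZMod n) + g)

lemma mem_cyc {ℓ n : ℕ} {v : ℕ → ℤ} {g : ZMod n} (h0 : v 0 = 0) (hl : (n : ℤ) ∣ v ℓ)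
    (e : Sym2 (ZMod n)) : e ∈ cyc ℓ n v g ↔ ∃ k < ℓ, e = edgeAt n v g k := by
  have hv : ∀ k < ℓ, ((v ((k + 1) % ℓ) : ℤ) : ZMod n) = ((v (k + 1) : ℤ) : ZMod n) := by
    intro k hk
    rcases Nat.lt_or_ge (k + 1) ℓ with h | h
    · rw [Nat.mod_eq_of_lt h]
    · have : k + 1 = ℓ := by omega
      rw [this, Nat.mod_self, h0, (ZMod.intCast_zmod_eq_zero_iff_dvd _ _).2 hl]; simp
  unfold cyc cycleEdges edgeAt
  simp only [Finset.mem_image, Finset.mem_univ, true_and]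
  constructor
  · rintro ⟨k, rfl⟩
    exact ⟨k.1, k.2, by rw [hv k.1 k.2]⟩
  · rintro ⟨k, hk, rfl⟩
    exact ⟨⟨k, hk⟩, by simp only [hv k hk]⟩

lemma translate_cyc {ℓ n : ℕ} {v : ℕ → ℤ} {g g' : ZMod n} :
    translateCycle g' (cyc ℓ n v g) = cyc ℓ n v (g + g') := by
  unfold translateCycle cyc cycleEdges
  rw [Finset.image_image]
  congr 1
  funext k
  simp [add_assoc]

lemma edge_key {ℓ n N : ℕ} (hn : n = 2 * ℓ * N + 1) {k k' : ℕ} {v v' : ℕ → ℤ}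
    {σ lab : ℕ → ℤ} {ρ ρ' : ℤ} {g g' : ZMod n}
    (hσ : ∀ k, σ k = 1 ∨ σ k = -1)
    (hlab : ∀ k < ℓ, 0 ≤ lab k ∧ lab k < ℓ)
    (hinj : ∀ k < ℓ, ∀ k' < ℓ, lab k = lab k' → k = k')
    (hk : k < ℓ) (hk' : k' < ℓ) (h1 : 0 ≤ ρ ∧ ρ < N) (h1' : 0 ≤ ρ' ∧ ρ' < N)
    (h2 : v (k + 1) = v k + σ k * (lab k * N + 1 + ρ))
    (h2' : v' (k' + 1) = v' k' + σ k' * (lab k' * N + 1 + ρ'))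
    (he : edgeAt n v g k = edgeAt n v' g' k') :
    k = k' ∧ ρ = ρ' ∧ (v k : ZMod n) + g = (v' k' : ZMod n) + g' := by
  have bd : ∀ k < ℓ, ∀ ρ : ℤ, 0 ≤ ρ ∧ ρ < N → 1 ≤ lab k * N + 1 + ρ ∧ lab k * N + 1 + ρ ≤ ℓ * N := by
    intro k hk ρ h
    have := hlab k hk
    constructor
    · nlinarith [mul_nonneg this.1 (Int.natCast_nonneg N)]
    · nlinarith [mul_le_mul_of_nonneg_right (show lab k + 1 ≤ ℓ by omega) (Int.natCast_nonneg N)]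
  have b1 := bd k hk ρ h1
  have b2 := bd k' hk' ρ' h1'
  have hn' : (n : ℤ) = 2 * (ℓ * N) + 1 := by rw [hn]; push_cast; ring
  generalize hD : lab k * N + 1 + ρ = D at *
  generalize hD' : lab k' * N + 1 + ρ' = D' at *
  have small : ∀ x : ℤ, |x| < n → (x : ZMod n) = 0 → x = 0 := by
    intro x hx h
    exact Int.eq_zero_of_abs_lt_dvd ((ZMod.intCast_zmod_eq_zero_iff_dvd _ _).1 h) hx
  have eqD : D = D' → k = k' ∧ ρ = ρ' := by
    intro h
    rw [← hD, ← hD'] at h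
    have hl : lab k = lab k' := by
      rcases lt_trichotomy (lab k) (lab k') with h3 | h3 | h3
      · nlinarith [mul_le_mul_of_nonneg_right (show lab k + 1 ≤ lab k' by omega) (Int.natCast_nonneg N)]
      · exact h3
      · nlinarith [mul_le_mul_of_nonneg_right (show lab k' + 1 ≤ lab k by omega) (Int.natCast_nonneg N)]
    refine ⟨hinj _ hk _ hk' hl, ?_⟩
    rw [hl] at h; linarith
  unfold edgeAt at he
  rw [Sym2.eq_iff, h2, h2'] at he
  push_cast at he
  rcases he with ⟨ha, hb⟩ | ⟨ha, hb⟩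
  · have h3 : ((σ k * D - σ k' * D' : ℤ) : ZMod n) = 0 := by
      push_cast; linear_combination hb - ha
    have h4 : σ k * D - σ k' * D' = 0 := by
      apply small _ _ h3
      rw [abs_lt]
      rcases hσ k with h | h <;> rcases hσ k' with h' | h' <;> rw [h, h'] <;> constructor <;> linarith
    have h5 : D = D' := by
      rcases hσ k with h | h <;> rcases hσ k' with h' | h' <;> rw [h, h'] at h4 <;> linarith
    exact ⟨(eqD h5).1, (eqD h5).2, ha⟩
  · exfalso
    have h3 : ((σ k * D + σ k' * D' : ℤ) : ZMod n) = 0 := by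
      push_cast; linear_combination hb - ha
    have h4 : σ k * D + σ k' * D' = 0 := by
      apply small _ _ h3
      rw [abs_lt]
      rcases hσ k with h | h <;> rcases hσ k' with h' | h' <;> rw [h, h'] <;> constructor <;> linarith
    have h5 : D = D' := by
      rcases hσ k with h | h <;> rcases hσ k' with h' | h' <;> rw [h, h'] at h4 <;> linarith
    rw [← (eqD h5).1] at h4
    rcases hσ k with h | h <;> rw [h] at h4 <;> linarith

lemma abstract_systems {ℓ n N m : ℕ} (hℓ : 4 ≤ ℓ) (hN : 0 < N) (hn : n = 2 * ℓ * N + 1)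
    (σ lab : ℕ → ℤ) (ρ v : ℕ → ℕ → ℕ → ℤ)
    (hσ : ∀ k, σ k = 1 ∨ σ k = -1)
    (hlab : ∀ k < ℓ, 0 ≤ lab k ∧ lab k < ℓ)
    (hinj : ∀ k < ℓ, ∀ k' < ℓ, lab k = lab k' → k = k')
    (hρ : ∀ i j k, 0 ≤ ρ i j k ∧ ρ i j k < N)
    (hρi : ∀ i k, ∀ j < N, ∀ j' < N, ρ i j k = ρ i j' k → j = j')
    (hρs : ∀ i k, ∀ x : ℤ, 0 ≤ x → x < N → ∃ j < N, ρ i j k = x)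
    (hv0 : ∀ i j, v i j 0 = 0)
    (hvs : ∀ i j k, v i j (k + 1) = v i j k + σ k * (lab k * N + 1 + ρ i j k))
    (hvl : ∀ i j, (n : ℤ) ∣ v i j ℓ)
    (hvb : ∀ i j, ∀ k < ℓ, 0 ≤ v i j k ∧ v i j k < n)
    (hvi : ∀ i j, ∀ k < ℓ, ∀ k' < ℓ, v i j k = v i j k' → k = k')
    (horth : ∀ i < m, ∀ i' < m, i ≠ i' → ∀ j j', ∀ k < ℓ, ∀ k' < ℓ, k < k' →
      ρ i j k = ρ i' j' k → ρ i j k' = ρ i' j' k' →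
      ¬ (n : ℤ) ∣ (v i j k' - v i j k) - (v i' j' k' - v i' j' k)) :
    ∃ S : Set (Set (Finset (Sym2 (ZMod n)))),
      (∀ F ∈ S, IsCycleSystem ℓ F ∧ IsCyclicSystem F) ∧
      S.Pairwise Orthog ∧ S.ncard = m := by
  have hn' : (n : ℤ) = 2 * (ℓ * N) + 1 := by rw [hn]; push_cast; ring
  have hlN : (0 : ℤ) < ℓ * N := by positivity
  have key : ∀ {i j i' j' k k' : ℕ} {g g' : ZMod n}, k < ℓ → k' < ℓ →
      edgeAt n (v i j) g k = edgeAt n (v i' j') g' k' →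
      k = k' ∧ ρ i j k = ρ i' j' k' ∧ (v i j k : ZMod n) + g = (v i' j' k' : ZMod n) + g' := by
    intro i j i' j' k k' g g' hk hk' he
    exact edge_key hn hσ hlab hinj hk hk' (hρ i j k) (hρ i' j' k') (hvs i j k) (hvs i' j' k') he
  let F : ℕ → Set (Finset (Sym2 (ZMod n))) := fun i =>
    {E | ∃ j < N, ∃ g, E = cyc ℓ n (v i j) g}
  have mem : ∀ i j g e, e ∈ cyc ℓ n (v i j) g ↔ ∃ k < ℓ, e = edgeAt n (v i j) g k :=
    fun i j g e => mem_cyc (hv0 i j) (hvl i j) e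
  have orth : ∀ i < m, ∀ i' < m, i ≠ i' → Orthog (F i) (F i') := by
    rintro i hi i' hi' hne _ ⟨j, hj, g, rfl⟩ _ ⟨j', hj', g', rfl⟩
    have main : ∀ k < ℓ, ∀ k' < ℓ, k < k' →
        edgeAt n (v i j) g k ∈ cyc ℓ n (v i' j') g' →
        edgeAt n (v i j) g k' ∈ cyc ℓ n (v i' j') g' → False := by
      intro k hk k' hk' hlt h1 h2
      rw [mem] at h1 h2
      obtain ⟨a, ha, h1⟩ := h1
      obtain ⟨b, hb, h2⟩ := h2
      obtain ⟨rfl, h3, h4⟩ := key hk ha h1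
      obtain ⟨rfl, h5, h6⟩ := key hk' hb h2
      apply horth i hi i' hi' hne j j' _ ha _ hb hlt h3 h5
      rw [← ZMod.intCast_zmod_eq_zero_iff_dvd]
      push_cast
      linear_combination h6 - h4
    rw [Finset.card_le_one]
    intro a ha b hb
    rw [Finset.mem_inter] at ha hb
    obtain ⟨k, hk, rfl⟩ := (mem _ _ _ _).1 ha.1
    obtain ⟨k', hk', rfl⟩ := (mem _ _ _ _).1 hb.1
    rcases lt_trichotomy k k' with h | h | h
    · exact (main k hk k' hk' h ha.2 hb.2).elim
    · rw [h]
    · exact (main k' hk' k hk h hb.2 ha.2).elim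
  refine ⟨F '' (Set.Iio m), ?_, ?_, ?_⟩
  · rintro _ ⟨i, hi, rfl⟩
    refine ⟨⟨?_, ?_, ?_⟩, ?_⟩
    · rintro _ ⟨j, hj, g, rfl⟩
      refine ⟨_, ?_, rfl⟩
      intro k k' h
      have h1 : ((v i j k - v i j k' : ℤ) : ZMod n) = 0 := by
        push_cast; simp only at h; linear_combination h
      rw [ZMod.intCast_zmod_eq_zero_iff_dvd] at h1
      have b1 := hvb i j k k.2
      have b2 := hvb i j k' k'.2
      have := Int.eq_zero_of_abs_lt_dvd h1 (by rw [abs_lt]; constructor <;> linarith)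
      exact Fin.ext (hvi i j _ k.2 _ k'.2 (by linarith))
    · rintro _ ⟨j, hj, g, rfl⟩ _ ⟨j', hj', g', rfl⟩ hne
      rw [Finset.disjoint_left]
      intro e he he'
      apply hne
      obtain ⟨k, hk, rfl⟩ := (mem _ _ _ _).1 he
      obtain ⟨k', hk', he'⟩ := (mem _ _ _ _).1 he'
      obtain ⟨rfl, h3, h4⟩ := key hk hk' he'
      obtain rfl := hρi i k j hj j' hj' h3
      rw [add_left_cancel h4]
    · intro e
      constructor
      · intro hdiag
        have hex : ∃ (c : ZMod n) (d : ℤ), 1 ≤ d ∧ d ≤ ℓ * N ∧ e = s(c, c + (d : ZMod n)) := by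
          induction e using Sym2.ind with
          | _ a b =>
          rw [Sym2.mk_isDiag_iff] at hdiag
          have : NeZero n := ⟨by omega⟩
          have hx : ((b - a).val : ZMod n) = b - a := ZMod.natCast_zmod_val _
          have hlt := ZMod.val_lt (b - a)
          have hpos : (b - a).val ≠ 0 := by
            rw [Ne, ZMod.val_eq_zero, sub_eq_zero]; exact fun h => hdiag h.symm
          rcases le_or_gt ((b - a).val : ℤ) (ℓ * N) with h | h
          · refine ⟨a, (b - a).val, by omega, h, ?_⟩
            rw [Int.cast_natCast, hx]; congr 1; simp
          · refine ⟨b, n - (b - a).val, by omega, by omega, ?_⟩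
            rw [Sym2.eq_swap]; push_cast; rw [hx]; congr 1; simp
        obtain ⟨c, d, hd1, hd2, rfl⟩ := hex
        have hNz : (0 : ℤ) < N := by exact_mod_cast hN
        have hq0 : 0 ≤ (d - 1) / N := Int.ediv_nonneg (by omega) hNz.le
        have hq1 : (d - 1) / N < ℓ := Int.ediv_lt_of_lt_mul hNz (by omega)
        have hr0 := Int.emod_nonneg (d - 1) hNz.ne'
        have hr1 := Int.emod_lt_of_pos (d - 1) hNz
        have hdm := Int.emod_add_mul_ediv (d - 1) N
        have hsurj : ∃ k < ℓ, lab k = (d - 1) / N := by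
          let f : Fin ℓ → Fin ℓ := fun k => ⟨(lab k).toNat, by have := hlab k k.2; omega⟩
          have hf : Function.Injective f := by
            intro a b hab
            have := congrArg Fin.val hab
            simp only [f] at this
            have h1 := hlab a a.2
            have h2 := hlab b b.2
            exact Fin.ext (hinj _ a.2 _ b.2 (by omega))
          obtain ⟨k, hk⟩ := Finite.surjective_of_injective hf ⟨((d - 1) / N).toNat, by omega⟩
          refine ⟨k, k.2, ?_⟩
          have := congrArg Fin.val hk
          simp only [f] at this
          have h1 := hlab k k.2
          omega
        obtain ⟨k, hk, hlk⟩ := hsurj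
        obtain ⟨j, hj, hjr⟩ := hρs i k _ hr0 hr1
        have hd : lab k * N + 1 + ρ i j k = d := by rw [hlk, hjr]; linarith
        have hs := hvs i j k
        rw [hd] at hs
        rcases hσ k with h | h
        · refine ⟨_, ⟨j, hj, c - v i j k, rfl⟩, (mem _ _ _ _).2 ⟨k, hk, ?_⟩⟩
          unfold edgeAt
          rw [hs, h]; push_cast
          congr 1 <;> ring_nf
        · refine ⟨_, ⟨j, hj, c + d - v i j k, rfl⟩, (mem _ _ _ _).2 ⟨k, hk, ?_⟩⟩
          unfold edgeAt
          rw [hs, h, Sym2.eq_swap]; push_cast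
          congr 1 <;> ring_nf
      · rintro ⟨_, ⟨j, hj, g, rfl⟩, he⟩
        obtain ⟨k, hk, rfl⟩ := (mem _ _ _ _).1 he
        unfold edgeAt
        rw [Sym2.mk_isDiag_iff, hvs]
        intro h
        have h1 : ((σ k * (lab k * N + 1 + ρ i j k) : ℤ) : ZMod n) = 0 := by
          push_cast at h ⊢; linear_combination -h
        rw [ZMod.intCast_zmod_eq_zero_iff_dvd] at h1
        have h2 := hlab k hk
        have h3 := hρ i j k
        have h4 : 0 ≤ lab k * N := mul_nonneg h2.1 (Int.natCast_nonneg N)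
        have h5 := mul_le_mul_of_nonneg_right (show lab k + 1 ≤ ℓ by omega) (Int.natCast_nonneg N)
        have := Int.eq_zero_of_abs_lt_dvd h1 (by
          rw [abs_lt]
          rcases hσ k with h | h <;> rw [h] <;> constructor <;> linarith)
        rcases hσ k with h | h <;> rw [h] at this <;> linarith
    · rintro _ ⟨j, hj, g, rfl⟩ g'
      exact ⟨j, hj, _, translate_cyc⟩
  · rintro _ ⟨i, hi, rfl⟩ _ ⟨i', hi', rfl⟩ hne
    exact orth i hi i' hi' (fun h => hne (by rw [h]))
  · rw [Set.InjOn.ncard_image]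
    · rw [Set.ncard_eq_toFinset_card']; simp
    · intro i hi i' hi' h
      by_contra hne
      have ho := orth i hi i' hi' hne
      have m1 : cyc ℓ n (v i 0) 0 ∈ F i := ⟨0, hN, 0, rfl⟩
      have m2 : cyc ℓ n (v i 0) 0 ∈ F i' := by rw [← h]; exact m1
      have hc := ho _ m1 _ m2
      rw [Finset.inter_self, Finset.card_le_one] at hc
      have := hc _ ((mem i 0 0 _).2 ⟨0, by omega, rfl⟩) _ ((mem i 0 0 _).2 ⟨1, by omega, rfl⟩)
      have := (key (by omega) (by omega) this).1
      omega

lemma zig : ∀ (M : ℕ) (z d : ℕ → ℤ) (ε : ℤ), (ε = 1 ∨ ε = -1) →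
    (∀ k < M, z (k + 1) = z k + ε * (-1) ^ k * d k) → (∀ k < M, 0 < d k) →
    (∀ k, k + 1 < M → d (k + 1) < d k) →
    ∀ k, 0 < k → k ≤ M → 0 < ε * (z k - z 0) ∧ ε * (z k - z 0) ≤ d 0 := by
  intro M
  induction M with
  | zero => intro z d ε _ _ _ _ k h1 h2; omega
  | succ M ih =>
    intro z d ε hε hz hd hdec k h1 h2
    have hε2 : ε * ε = 1 := by rcases hε with h | h <;> rw [h] <;> norm_num
    have hz0 : z 1 = z 0 + ε * d 0 := by simpa using hz 0 (by omega)
    have hd0 := hd 0 (by omega)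
    obtain ⟨k, rfl⟩ : ∃ k', k = k' + 1 := ⟨k - 1, by omega⟩
    rcases Nat.eq_zero_or_pos k with rfl | hk
    · rw [zero_add, hz0]
      have : ε * (z 0 + ε * d 0 - z 0) = d 0 := by linear_combination d 0 * hε2
      rw [this]; exact ⟨hd0, le_refl _⟩
    · have := ih (fun k => z (k + 1)) (fun k => d (k + 1)) (-ε)
        (by rcases hε with h | h <;> rw [h] <;> norm_num)
        (fun k hk => by rw [hz (k + 1) (by omega)]; ring)
        (fun k hk => hd (k + 1) (by omega))
        (fun k hk => hdec (k + 1) (by omega)) k hk (by omega)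
      simp only [zero_add] at this
      have hdd := hdec 0 (by omega)
      simp only [zero_add] at hdd
      have e1 : ε * (z (k + 1) - z 0) = d 0 - (-ε * (z (k + 1) - z 1)) := by
        rw [hz0]; linear_combination d 0 * hε2
      rw [e1]
      constructor <;> linarith [this.1, this.2]

lemma zig_inj (M : ℕ) (z d : ℕ → ℤ)
    (hz : ∀ k < M, z (k + 1) = z k + (-1) ^ k * d k) (hd : ∀ k < M, 0 < d k)
    (hdec : ∀ k, k + 1 < M → d (k + 1) < d k) :
    (∀ k ≤ M, ∀ k' ≤ M, z k = z k' → k = k') ∧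
    (0 < M → ∀ k ≤ M, z 0 ≤ z k ∧ z k ≤ z 0 + d 0) := by
  constructor
  · have main : ∀ k k', k < k' → k' ≤ M → z k ≠ z k' := by
      intro k k' hlt hM he
      have := zig (M - k) (fun x => z (k + x)) (fun x => d (k + x)) ((-1) ^ k)
        (neg_one_pow_eq_or ℤ k)
        (fun x hx => by
          have := hz (k + x) (by omega)
          rw [← add_assoc, this, pow_add])
        (fun x hx => hd _ (by omega)) (fun x hx => hdec (k + x) (by omega)) (k' - k)
        (by omega) (by omega)
      simp only [add_zero, show k + (k' - k) = k' by omega, he, sub_self, mul_zero] at this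
      omega
    intro k hk k' hk' he
    rcases lt_trichotomy k k' with h | h | h
    · exact (main k k' h hk' he).elim
    · exact h
    · exact (main k' k h hk he.symm).elim
  · intro hM k hk
    rcases Nat.eq_zero_or_pos k with rfl | hk0
    · have := hd 0 hM
      constructor <;> linarith
    · have := zig M z d 1 (Or.inl rfl) (fun k hk => by rw [hz k hk]; ring) hd hdec k hk0 hk
      constructor <;> linarith [this.1, this.2]

/-- basic residues -/
def rr (N i j t : ℕ) : ℤ := ((j + i * t) % N : ℕ)

/-- residues, complemented where `c` holds -/
def res (N : ℕ) (t : ℕ → ℕ) (c : ℕ → Bool) (i j k : ℕ) : ℤ :=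
  if c k then N - 1 - rr N i j (t k) else rr N i j (t k)

/-- partial sums -/
def vv (N : ℕ) (σ lab : ℕ → ℤ) (ρ : ℕ → ℕ → ℕ → ℤ) (i j k : ℕ) : ℤ :=
  ∑ x ∈ Finset.range k, σ x * (lab x * N + 1 + ρ i j x)

lemma vv_zero (N : ℕ) (σ lab : ℕ → ℤ) (ρ : ℕ → ℕ → ℕ → ℤ) (i j : ℕ) :
    vv N σ lab ρ i j 0 = 0 := by simp [vv]

lemma vv_succ (N : ℕ) (σ lab : ℕ → ℤ) (ρ : ℕ → ℕ → ℕ → ℤ) (i j k : ℕ) :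
    vv N σ lab ρ i j (k + 1) = vv N σ lab ρ i j k + σ k * (lab k * N + 1 + ρ i j k) := by
  simp [vv, Finset.sum_range_succ]

lemma rr_bd {N : ℕ} (hN : 0 < N) (i j t : ℕ) : 0 ≤ rr N i j t ∧ rr N i j t < N := by
  unfold rr
  have := Nat.mod_lt (j + i * t) hN
  omega

lemma rr_dvd (N i j t : ℕ) : (N : ℤ) ∣ (j + i * t : ℤ) - rr N i j t := by
  unfold rr
  push_cast
  exact Int.dvd_self_sub_emod

lemma res_bd {N : ℕ} (hN : 0 < N) (t : ℕ → ℕ) (c : ℕ → Bool) (i j k : ℕ) :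
    0 ≤ res N t c i j k ∧ res N t c i j k < N := by
  have := rr_bd hN i j (t k)
  unfold res
  split_ifs <;> omega

lemma res_eq {N : ℕ} {t : ℕ → ℕ} {c : ℕ → Bool} {i j i' j' k : ℕ}
    (h : res N t c i j k = res N t c i' j' k) : rr N i j (t k) = rr N i' j' (t k) := by
  unfold res at h
  split_ifs at h <;> omega

lemma res_inj {N : ℕ} (t : ℕ → ℕ) (c : ℕ → Bool) (i k : ℕ) :
    ∀ j < N, ∀ j' < N, res N t c i j k = res N t c i j' k → j = j' := by
  intro j hj j' hj' h
  have h := res_eq h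
  have h1 := rr_dvd N i j (t k)
  have h2 := rr_dvd N i j' (t k)
  rw [h] at h1
  have h3 : (N : ℤ) ∣ (j : ℤ) - j' := by
    have := dvd_sub h1 h2
    ring_nf at this ⊢
    exact this
  have := Int.eq_zero_of_abs_lt_dvd h3 (by rw [abs_lt]; constructor <;> omega)
  omega

lemma res_surj {N : ℕ} (hN : 0 < N) (t : ℕ → ℕ) (c : ℕ → Bool) (i k : ℕ) :
    ∀ x : ℤ, 0 ≤ x → x < N → ∃ j < N, res N t c i j k = x := by
  have base : ∀ x : ℤ, 0 ≤ x → x < N → ∃ j < N, rr N i j (t k) = x := by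
    intro x h0 h1
    have hNz : (0 : ℤ) < N := by exact_mod_cast hN
    have e0 := Int.emod_nonneg (x - i * t k) hNz.ne'
    have e1 := Int.emod_lt_of_pos (x - i * t k) hNz
    refine ⟨((x - i * t k) % N).toNat, by omega, ?_⟩
    have h2 := rr_dvd N i ((x - i * t k) % N).toNat (t k)
    rw [Int.toNat_of_nonneg e0] at h2
    have h3 := rr_bd hN i ((x - i * t k) % N).toNat (t k)
    have h4 : (N : ℤ) ∣ (x - i * t k) - (x - i * t k) % N := Int.dvd_self_sub_emod
    have h5 : (N : ℤ) ∣ x - rr N i ((x - i * t k) % N).toNat (t k) := by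
      have := dvd_add h2 h4
      ring_nf at this ⊢
      exact this
    have := Int.eq_zero_of_abs_lt_dvd h5 (by rw [abs_lt]; constructor <;> omega)
    omega
  intro x h0 h1
  unfold res
  split_ifs
  · obtain ⟨j, hj, h⟩ := base (N - 1 - x) (by omega) (by omega)
    exact ⟨j, hj, by omega⟩
  · exact base x h0 h1

lemma mul_sep {N ℓ m i i' a : ℕ} (hm : m * ℓ ≤ N) (hi : i < m) (hi' : i' < m) (hne : i ≠ i')
    {b : ℕ} (ha : a ≤ ℓ) (hb : b ≤ ℓ) (hab : a ≠ b)
    (h : (N : ℤ) ∣ ((i : ℤ) - i') * ((a : ℤ) - b)) : False := by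
  have h1 : |((i : ℤ) - i')| ≤ m - 1 := by rw [abs_le]; constructor <;> omega
  have h2 : |((a : ℤ) - b)| ≤ ℓ := by rw [abs_le]; constructor <;> omega
  have hℓ : 0 < ℓ := by omega
  have h3 : |((i : ℤ) - i') * ((a : ℤ) - b)| < N := by
    rw [abs_mul]
    have : ((m : ℤ) * ℓ) ≤ N := by exact_mod_cast hm
    have := mul_le_mul h1 h2 (abs_nonneg _) (by omega)
    have : (0 : ℤ) < ℓ := by exact_mod_cast hℓ
    nlinarith
  have := Int.eq_zero_of_abs_lt_dvd h h3
  rcases mul_eq_zero.1 this with h | h <;> omega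

lemma rr_sep {N ℓ m i i' j j' t t' : ℕ} (hm : m * ℓ ≤ N) (hi : i < m) (hi' : i' < m)
    (hne : i ≠ i') (ht : t ≤ ℓ) (ht' : t' ≤ ℓ) (htt : t ≠ t')
    (h : (N : ℤ) ∣ (rr N i j t - rr N i' j' t) - (rr N i j t' - rr N i' j' t')) : False := by
  apply mul_sep hm hi hi' hne ht ht' htt
  have h1 := rr_dvd N i j t
  have h2 := rr_dvd N i' j' t
  have h3 := rr_dvd N i j t'
  have h4 := rr_dvd N i' j' t'
  have := dvd_add (dvd_sub (dvd_sub h1 h2) (dvd_sub h3 h4)) h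
  ring_nf at this ⊢
  exact this

def sgA (k : ℕ) : ℤ := (-1) ^ k
def labA (h k : ℕ) : ℤ :=
  if k < 2 * h then 4 * h - 1 - k else if k < 4 * h - 1 then 4 * h - 2 - k else 2 * h - 1
def tA (k : ℕ) : ℕ := 2 * (k / 4) + k % 2
def cA (k : ℕ) : Bool := decide (2 ≤ k % 4)

lemma caseA {h n N m : ℕ} (hh : 1 ≤ h) (hN : 0 < N) (hn : n = 2 * (4 * h) * N + 1)
    (hm : m * (4 * h) ≤ N) :
    ∃ S : Set (Set (Finset (Sym2 (ZMod n)))),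
      (∀ F ∈ S, IsCycleSystem (4 * h) F ∧ IsCyclicSystem F) ∧
      S.Pairwise Orthog ∧ S.ncard = m := by
  have hn' : (n : ℤ) = 8 * (h * N) + 1 := by rw [hn]; push_cast; ring
  have hNz : (0 : ℤ) < N := by exact_mod_cast hN
  have hhz : (1 : ℤ) ≤ h := by exact_mod_cast hh
  have hhN : (N : ℤ) ≤ h * N := by nlinarith
  set ρ := res N tA cA with hρdef
  set v := vv N sgA (labA h) ρ with hvdef
  have hvs : ∀ i j k, v i j (k + 1) = v i j k + sgA k * (labA h k * N + 1 + ρ i j k) :=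
    fun i j k => vv_succ _ _ _ _ _ _ _
  have hv0 : ∀ i j, v i j 0 = 0 := fun i j => vv_zero _ _ _ _ _ _
  have hρ : ∀ i j k, 0 ≤ ρ i j k ∧ ρ i j k < N := fun i j k => res_bd hN _ _ _ _ _
  have hlabb : ∀ k < 4 * h, 0 ≤ labA h k ∧ labA h k < (4 * h : ℕ) := by
    intro k hk; unfold labA; split_ifs <;> omega
  have hs0 : ∀ s, sgA (4 * s) = 1 := fun s => by simp [sgA, pow_mul]
  have hs1 : ∀ s, sgA (4 * s + 1) = -1 := fun s => by simp [sgA, pow_add, pow_mul]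
  have hs2 : ∀ s, sgA (4 * s + 2) = 1 := fun s => by simp [sgA, pow_add, pow_mul]
  have hs3 : ∀ s, sgA (4 * s + 3) = -1 := fun s => by simp [sgA, pow_add, pow_mul]
  have hr02 : ∀ i j s, ρ i j (4 * s) + ρ i j (4 * s + 2) = N - 1 := by
    intro i j s
    have e1 : tA (4 * s + 2) = tA (4 * s) := by unfold tA; omega
    have e2 : cA (4 * s + 2) = true := by unfold cA; simp
    have e3 : cA (4 * s) = false := by unfold cA; simp
    simp [hρdef, res, e1, e2, e3]
  have hr13 : ∀ i j s, ρ i j (4 * s + 1) + ρ i j (4 * s + 3) = N - 1 := by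
    intro i j s
    have e1 : tA (4 * s + 3) = tA (4 * s + 1) := by unfold tA; omega
    have e2 : cA (4 * s + 3) = true := by unfold cA; simp
    have e3 : cA (4 * s + 1) = false := by unfold cA; simp
    simp [hρdef, res, e1, e2, e3]
  have hblock : ∀ i j s, v i j (4 * s + 4) = v i j (4 * s) + (labA h (4 * s) - labA h (4 * s + 1)
      + labA h (4 * s + 2) - labA h (4 * s + 3)) * N := by
    intro i j s
    rw [hvs i j (4 * s + 3), hvs i j (4 * s + 2), hvs i j (4 * s + 1), hvs i j (4 * s),
      hs0, hs1, hs2, hs3]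
    linear_combination hr02 i j s - hr13 i j s
  have hpart : ∀ i j s, s < h → v i j (4 * s) = 2 * s * N := by
    intro i j s
    induction s with
    | zero => intro _; simp [hv0]
    | succ s ih =>
      intro hs
      have e : labA h (4 * s) - labA h (4 * s + 1) + labA h (4 * s + 2) - labA h (4 * s + 3) = 2 := by
        unfold labA; split_ifs <;> omega
      rw [show 4 * (s + 1) = 4 * s + 4 by ring, hblock, e, ih (by omega)]
      push_cast; ring
  have hclose : ∀ i j, v i j (4 * h) = 0 := by
    intro i j
    obtain ⟨s, rfl⟩ : ∃ s, h = s + 1 := ⟨h - 1, by omega⟩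
    have e : labA (s + 1) (4 * s) - labA (s + 1) (4 * s + 1) + labA (s + 1) (4 * s + 2)
        - labA (s + 1) (4 * s + 3) = - 2 * s := by
      unfold labA; split_ifs <;> omega
    rw [show 4 * (s + 1) = 4 * s + 4 by ring, hblock, e, hpart i j s (by omega)]
    ring
  have hd1 : ∀ i j, ∀ k < 4 * h, 0 < labA h k * N + 1 + ρ i j k := by
    intro i j k hk
    have := mul_nonneg (hlabb k hk).1 hNz.le
    linarith [(hρ i j k).1]
  have hzig := fun i j => zig_inj (4 * h - 1) (v i j) (fun k => labA h k * N + 1 + ρ i j k)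
    (fun k hk => hvs i j k) (fun k hk => hd1 i j k (by omega)) (by
      intro k hk
      have : labA h (k + 1) + 1 ≤ labA h k := by unfold labA; split_ifs <;> omega
      have := mul_le_mul_of_nonneg_right this hNz.le
      linarith [(hρ i j k).1, (hρ i j (k + 1)).2])
  refine abstract_systems (ℓ := 4 * h) (N := N) (m := m) (by omega) hN hn sgA (labA h) ρ v
    (fun k => neg_one_pow_eq_or ℤ k) hlabb ?_ hρ (fun i k => res_inj _ _ _ _)
    (fun i k => res_surj hN _ _ _ _) hv0 hvs (fun i j => by rw [hclose]; exact dvd_zero _) ?_ ?_ ?_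
  · intro k hk k' hk'
    unfold labA
    split_ifs <;> omega
  · intro i j k hk
    have h1 := (hzig i j).2 (by omega) k (by omega)
    rw [hv0] at h1
    have h2 := mul_le_mul_of_nonneg_right
      (show labA h 0 + 1 ≤ 4 * h by have := hlabb 0 (by omega); push_cast at this; omega) hNz.le
    have h3 := (hρ i j 0).2
    constructor
    · linarith
    · nlinarith
  · intro i j k hk k' hk'
    exact (hzig i j).1 k (by omega) k' (by omega)
  · intro i hi i' hi' hne j j' k hk k' hk' hlt h1 h2 hdvd
    have e1 := res_eq h1
    have e2 := res_eq h2
    by_cases ht : tA k = tA k'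
    · obtain rfl : k' = k + 2 := by unfold tA at ht; omega
      have hsg : sgA (k + 1) = - sgA k := by simp [sgA, pow_succ]
      have e3 : (v i j (k + 2) - v i j k) - (v i' j' (k + 2) - v i' j' k)
          = - sgA k * (ρ i j (k + 1) - ρ i' j' (k + 1)) := by
        rw [hvs i j (k + 1), hvs i j k, hvs i' j' (k + 1), hvs i' j' k, hsg, h1]
        ring
      have b1 := hρ i j (k + 1)
      have b2 := hρ i' j' (k + 1)
      have e4 : ρ i j (k + 1) = ρ i' j' (k + 1) := by
        rw [e3] at hdvd
        rcases neg_one_pow_eq_or ℤ k with h | h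
        all_goals
          rw [show sgA k = _ from h] at hdvd
          have := Int.eq_zero_of_abs_lt_dvd hdvd (by rw [abs_lt]; constructor <;> linarith)
          linarith
      have e5 := res_eq e4
      exact rr_sep (j := j) (j' := j') (t := tA k) (t' := tA (k + 1)) hm hi hi' hne (by unfold tA; omega)
        (by unfold tA; omega) (by unfold tA; omega) (by rw [e1, e5]; simp)
    · exact rr_sep (j := j) (j' := j') (t := tA k) (t' := tA k') hm hi hi' hne (by unfold tA; omega)
        (by unfold tA; omega) ht (by rw [e1, e2]; simp)

def sgB (h k : ℕ) : ℤ := if k ≤ 2 * h then (-1) ^ k else - (-1) ^ k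
def labB (h k : ℕ) : ℤ :=
  if k < 2 * h then
    (if k % 2 = 0 then 4 * h - 1 - 2 * k else if k + 1 = 2 * h then 0 else 4 * h - 2 * k)
  else if k = 2 * h then 4 * h
  else if k = 4 * h + 1 then 4 * h + 1
  else if k = 2 * h + 1 then 1
  else if k = 2 * h + 2 then 2
  else if k % 2 = 1 then 2 * k - 4 * h - 2 else 2 * k - 4 * h - 3
def tB (h k : ℕ) : ℕ :=
  if k < 2 * h then 2 * h - 1 - k
  else if k = 2 * h ∨ k = 4 * h + 1 then 2 * h
  else if k % 2 = 1 then k - 2 * h else k - 2 * h - 2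
def cB (h k : ℕ) : Bool := decide (2 * h < k)

lemma labB_block {h a s : ℕ} (has : a + s + 1 = h) :
    (labB h (2 * a) - labB h (2 * a + 1) + labB h (2 * h + 1 + 2 * s)
          - labB h (2 * h + 2 + 2 * s)) + (if s = 0 then 0 else 2) = 2 := by
  have l0 : labB h (2 * a) = 4 * s + 3 := by
    unfold labB; rw [if_pos (by omega), if_pos (by omega)]; omega
  rcases Nat.eq_zero_or_pos s with rfl | hs
  · have l1 : labB h (2 * a + 1) = 0 := by
      unfold labB; rw [if_pos (by omega), if_neg (by omega), if_pos (by omega)]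
    have l2 : labB h (2 * h + 1 + 2 * 0) = 1 := by
      unfold labB; split_ifs <;> omega
    have l3 : labB h (2 * h + 2 + 2 * 0) = 2 := by
      unfold labB; split_ifs <;> omega
    rw [l0, l1, l2, l3]; simp
  · have l1 : labB h (2 * a + 1) = 4 * s + 2 := by
      unfold labB; rw [if_pos (by omega), if_neg (by omega), if_neg (by omega)]; omega
    have l2 : labB h (2 * h + 1 + 2 * s) = 4 * s := by
      unfold labB; split_ifs <;> omega
    have l3 : labB h (2 * h + 2 + 2 * s) = 4 * s + 1 := by
      unfold labB; split_ifs <;> omega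
    rw [l0, l1, l2, l3, if_neg (by omega)]; ring

set_option maxHeartbeats 4000000 in
lemma caseB {h n N m : ℕ} (hh : 1 ≤ h) (hN : 0 < N) (hn : n = 2 * (4 * h + 2) * N + 1)
    (hm : m * (4 * h + 2) ≤ N) :
    ∃ S : Set (Set (Finset (Sym2 (ZMod n)))),
      (∀ F ∈ S, IsCycleSystem (4 * h + 2) F ∧ IsCyclicSystem F) ∧
      S.Pairwise Orthog ∧ S.ncard = m := by
  have hn' : (n : ℤ) = 8 * (h * N) + 4 * N + 1 := by rw [hn]; push_cast; ring
  have hNz : (0 : ℤ) < N := by exact_mod_cast hN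
  have hhz : (1 : ℤ) ≤ h := by exact_mod_cast hh
  have hhN : (N : ℤ) ≤ h * N := by nlinarith
  set ρ := res N (tB h) (cB h) with hρdef
  set v := vv N (sgB h) (labB h) ρ with hvdef
  have hvs : ∀ i j k, v i j (k + 1) = v i j k + sgB h k * (labB h k * N + 1 + ρ i j k) :=
    fun i j k => vv_succ _ _ _ _ _ _ _
  have hv0 : ∀ i j, v i j 0 = 0 := fun i j => vv_zero _ _ _ _ _ _
  have hρ : ∀ i j k, 0 ≤ ρ i j k ∧ ρ i j k < N := fun i j k => res_bd hN _ _ _ _ _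
  have hσ : ∀ k, sgB h k = 1 ∨ sgB h k = -1 := by
    intro k
    unfold sgB
    rcases neg_one_pow_eq_or ℤ k with e | e <;> rw [e] <;> split_ifs <;> simp
  have hlabb : ∀ k < 4 * h + 2, 0 ≤ labB h k ∧ labB h k < (4 * h + 2 : ℕ) := by
    intro k hk; unfold labB; split_ifs <;> omega
  -- signs
  have sE0 : ∀ a < h, sgB h (2 * a) = 1 := fun a ha => by
    unfold sgB; rw [if_pos (by omega)]; simp [pow_mul]
  have sE1 : ∀ a < h, sgB h (2 * a + 1) = -1 := fun a ha => by
    unfold sgB; rw [if_pos (by omega)]; simp [pow_add, pow_mul]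
  have sq : sgB h (2 * h) = 1 := by
    unfold sgB; rw [if_pos (by omega)]; simp [pow_mul]
  have sF0 : ∀ s, sgB h (2 * h + 1 + 2 * s) = 1 := fun s => by
    unfold sgB; rw [if_neg (by omega)]; simp [pow_add, pow_mul]
  have sF1 : ∀ s, sgB h (2 * h + 2 + 2 * s) = -1 := fun s => by
    unfold sgB; rw [if_neg (by omega)]; simp [pow_add, pow_mul]
  have sp : sgB h (4 * h + 1) = 1 := by
    rw [show 4 * h + 1 = 2 * h + 1 + 2 * h by ring]; exact sF0 h
  -- residues in pairs
  have rpair : ∀ i j k k', k ≤ 2 * h → 2 * h < k' → tB h k = tB h k' →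
      ρ i j k + ρ i j k' = N - 1 := by
    intro i j k k' h1 h2 h3
    have e2 : cB h k' = true := by unfold cB; simp; omega
    have e3 : cB h k = false := by unfold cB; simp; omega
    simp [hρdef, res, h3, e2, e3]
  have r0 : ∀ i j a s, a + s + 1 = h → ρ i j (2 * a) + ρ i j (2 * h + 1 + 2 * s) = N - 1 := by
    intro i j a s has
    exact rpair _ _ _ _ (by omega) (by omega) (by unfold tB; split_ifs <;> omega)
  have r1 : ∀ i j a s, a + s + 1 = h → ρ i j (2 * a + 1) + ρ i j (2 * h + 2 + 2 * s) = N - 1 := by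
    intro i j a s has
    exact rpair _ _ _ _ (by omega) (by omega) (by unfold tB; split_ifs <;> omega)
  have rq : ∀ i j, ρ i j (2 * h) + ρ i j (4 * h + 1) = N - 1 := by
    intro i j
    exact rpair _ _ _ _ (by omega) (by omega) (by unfold tB; split_ifs <;> omega)
  have hS : ∀ i j s a, a + s = h → v i j (2 * h + 1 + 2 * s) - v i j (2 * a)
      = (labB h (2 * h) * N + 1 + ρ i j (2 * h)) + (if s = 0 then (0 : ℤ) else 2 * N) := by
    intro i j s
    induction s with
    | zero =>
      intro a ha
      obtain rfl : a = h := by omega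
      rw [mul_zero, add_zero, hvs i j, sq]; simp
    | succ s ih =>
      intro a ha
      have ih := ih (a + 1) (by omega)
      have e1 := hvs i j (2 * a)
      have e2 := hvs i j (2 * a + 1)
      have e3 := hvs i j (2 * h + 1 + 2 * s)
      have e4 := hvs i j (2 * h + 2 + 2 * s)
      rw [sE0 a (by omega)] at e1
      rw [sE1 a (by omega)] at e2
      rw [sF0] at e3
      rw [sF1] at e4
      rw [show 2 * h + 1 + 2 * s + 1 = 2 * h + 2 + 2 * s by ring] at e3
      rw [show 2 * (a + 1) = 2 * a + 1 + 1 by ring] at ih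
      rw [show 2 * h + 1 + 2 * (s + 1) = 2 * h + 2 + 2 * s + 1 by ring]
      have hl : (labB h (2 * a) - labB h (2 * a + 1) + labB h (2 * h + 1 + 2 * s)
          - labB h (2 * h + 2 + 2 * s)) + (if s = 0 then 0 else 2) = 2 := by
        exact labB_block (by omega)
      have p0 := r0 i j a s (by omega)
      have p1 := r1 i j a s (by omega)
      rw [if_neg (by omega)]
      have hi : (if s = 0 then (0 : ℤ) else 2 * N) = (if s = 0 then 0 else 2) * N := by
        split_ifs <;> ring
      rw [hi] at ih
      linear_combination ih + e1 + e2 + e3 + e4 + p0 - p1 + (N : ℤ) * hl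
  have hlq : labB h (2 * h) = 4 * h := by unfold labB; split_ifs <;> omega
  have hlp : labB h (4 * h + 1) = 4 * h + 1 := by unfold labB; split_ifs <;> omega
  have hq1 : ∀ i j, v i j (4 * h + 1) = 4 * h * N + 1 + ρ i j (2 * h) + 2 * N := by
    intro i j
    have := hS i j h 0 (by omega)
    rw [show 2 * h + 1 + 2 * h = 4 * h + 1 by ring, mul_zero, hv0, if_neg (by omega), hlq] at this
    linarith
  have hclose : ∀ i j, v i j (4 * h + 2) = n := by
    intro i j
    rw [hvs i j (4 * h + 1), hq1, sp, hlp, hn']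
    linear_combination rq i j
  have hd1 : ∀ i j, ∀ k < 4 * h + 2, 0 < labB h k * N + 1 + ρ i j k := by
    intro i j k hk
    have := mul_nonneg (hlabb k hk).1 hNz.le
    linarith [(hρ i j k).1]
  have hdlt : ∀ i j k k', labB h k' < labB h k →
      labB h k' * N + 1 + ρ i j k' < labB h k * N + 1 + ρ i j k := by
    intro i j k k' hlt
    have := mul_le_mul_of_nonneg_right (show labB h k' + 1 ≤ labB h k by omega) hNz.le
    linarith [(hρ i j k).1, (hρ i j k').2]
  have hz1 := fun i j => zig_inj (2 * h) (v i j) (fun k => labB h k * N + 1 + ρ i j k)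
    (fun k hk => by rw [hvs i j k]; unfold sgB; rw [if_pos (by omega)])
    (fun k hk => hd1 i j k (by omega)) (by
      intro k hk
      apply hdlt
      unfold labB; split_ifs <;> omega)
  have hz2 := fun i j => zig_inj (2 * h) (fun k => v i j (4 * h + 1 - k))
    (fun k => labB h (4 * h - k) * N + 1 + ρ i j (4 * h - k))
    (fun k hk => by
      have e1 := hvs i j (4 * h - k)
      rw [show 4 * h - k + 1 = 4 * h + 1 - k by omega] at e1
      have e2 : sgB h (4 * h - k) = - (-1) ^ k := by
        unfold sgB; rw [if_neg (by omega)]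
        rcases Nat.even_or_odd k with hk2 | hk2
        · rw [hk2.neg_one_pow, Even.neg_one_pow]
          obtain ⟨b, rfl⟩ := hk2
          exact ⟨2 * h - b, by omega⟩
        · rw [hk2.neg_one_pow, Odd.neg_one_pow]
          obtain ⟨b, rfl⟩ := hk2
          exact ⟨2 * h - b - 1, by omega⟩
      simp only [show 4 * h + 1 - (k + 1) = 4 * h - k by omega]
      rw [e1, e2]; ring)
    (fun k hk => hd1 i j _ (by omega)) (by
      intro k hk
      apply hdlt
      unfold labB; split_ifs <;> omega)
  have hb1 : ∀ i j, ∀ k ≤ 2 * h, 0 ≤ v i j k ∧ v i j k ≤ 4 * (h * N) := by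
    intro i j k hk
    have h1 := (hz1 i j).2 (by omega) k hk
    have h2 : labB h 0 + 1 ≤ 4 * h := by unfold labB; split_ifs <;> omega
    have h2 := mul_le_mul_of_nonneg_right h2 hNz.le
    have h3 := (hρ i j 0).2
    rw [hv0] at h1
    constructor
    · linarith
    · linarith
  have hb2 : ∀ i j, ∀ k, 2 * h < k → k < 4 * h + 2 →
      4 * (h * N) < v i j k ∧ v i j k < n := by
    intro i j k hk hk'
    have h1 := (hz2 i j).2 (by omega) (4 * h + 1 - k) (by omega)
    simp only [show 4 * h + 1 - (4 * h + 1 - k) = k by omega, Nat.sub_zero] at h1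
    have h2 : labB h (4 * h) + 1 ≤ 4 * h := by unfold labB; split_ifs <;> omega
    have h2 := mul_le_mul_of_nonneg_right h2 hNz.le
    have h3 := (hρ i j (4 * h)).2
    have h4 := hρ i j (2 * h)
    rw [hq1] at h1
    constructor
    · linarith
    · linarith
  have hmod : ∀ i j a, a ≤ h → (N : ℤ) ∣ v i j (2 * a) - i * a := by
    intro i j a
    induction a with
    | zero => intro _; simp [hv0]
    | succ a ih =>
      intro ha
      have ih := ih (by omega)
      rw [show 2 * (a + 1) = 2 * a + 1 + 1 by ring, hvs i j (2 * a + 1), hvs i j (2 * a),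
        sE0 a (by omega), sE1 a (by omega)]
      have t0 : ρ i j (2 * a) = rr N i j (2 * h - 1 - 2 * a) := by
        have e1 : cB h (2 * a) = false := by unfold cB; simp; omega
        have e2 : tB h (2 * a) = 2 * h - 1 - 2 * a := by unfold tB; split_ifs <;> omega
        simp [hρdef, res, e1, e2]
      have t1 : ρ i j (2 * a + 1) = rr N i j (2 * h - 1 - (2 * a + 1)) := by
        have e1 : cB h (2 * a + 1) = false := by unfold cB; simp; omega
        have e2 : tB h (2 * a + 1) = 2 * h - 1 - (2 * a + 1) := by unfold tB; split_ifs <;> omega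
        simp [hρdef, res, e1, e2]
      have d0 := rr_dvd N i j (2 * h - 1 - 2 * a)
      have d1 := rr_dvd N i j (2 * h - 1 - (2 * a + 1))
      rw [← t0] at d0
      rw [← t1] at d1
      have c0 : ((2 * h - 1 - 2 * a : ℕ) : ℤ) = ((2 * h - 1 - (2 * a + 1) : ℕ) : ℤ) + 1 := by omega
      rw [c0] at d0
      generalize ((2 * h - 1 - (2 * a + 1) : ℕ) : ℤ) = T at d0 d1
      have d2 : (N : ℤ) ∣ N * (labB h (2 * a) - labB h (2 * a + 1)) := dvd_mul_right _ _
      obtain ⟨x, hx⟩ := dvd_add (dvd_add ih d2) (dvd_sub d1 d0)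
      refine ⟨x, ?_⟩
      rw [Nat.cast_add, Nat.cast_one]
      linear_combination hx
  refine abstract_systems (ℓ := 4 * h + 2) (N := N) (m := m) (by omega) hN hn (sgB h) (labB h) ρ v
    hσ hlabb ?_ hρ (fun i k => res_inj _ _ _ _)
    (fun i k => res_surj hN _ _ _ _) hv0 hvs (fun i j => by rw [hclose]) ?_ ?_ ?_
  · intro k hk k' hk'
    unfold labB
    split_ifs <;> omega
  · intro i j k hk
    rcases Nat.lt_or_ge (2 * h) k with h1 | h1
    · have := hb2 i j k h1 hk
      constructor <;> linarith
    · have := hb1 i j k h1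
      constructor <;> linarith
  · intro i j k hk k' hk' he
    rcases Nat.lt_or_ge (2 * h) k with h1 | h1 <;> rcases Nat.lt_or_ge (2 * h) k' with h2 | h2
    · have := (hz2 i j).1 (4 * h + 1 - k) (by omega) (4 * h + 1 - k') (by omega) (by
        simp only [show 4 * h + 1 - (4 * h + 1 - k) = k by omega,
          show 4 * h + 1 - (4 * h + 1 - k') = k' by omega]
        exact he)
      omega
    · have := hb2 i j k h1 hk
      have := hb1 i j k' h2
      linarith
    · have := hb2 i j k' h2 hk'
      have := hb1 i j k h1
      linarith
    · exact (hz1 i j).1 k h1 k' h2 he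
  · intro i hi i' hi' hne j j' k hk k' hk' hlt h1 h2 hdvd
    have tb : ∀ k < 4 * h + 2, tB h k ≤ 4 * h + 2 := by
      intro k hk; unfold tB; split_ifs <;> omega
    -- two positions with different parameters cannot have the same residue change
    have sep : ∀ a b, a ≤ 2 * h → b ≤ 2 * h → a ≠ b →
        ρ i j a - ρ i' j' a = ρ i j b - ρ i' j' b → False := by
      intro a b ha hb hab he
      have e1 : cB h a = false := by unfold cB; simp; omega
      have e2 : cB h b = false := by unfold cB; simp; omega
      simp only [hρdef, res, e1, e2] at he
      exact rr_sep (j := j) (j' := j') (t := tB h a) (t' := tB h b) hm hi hi' hne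
        (tb _ (by omega)) (tb _ (by omega)) (by unfold tB; split_ifs <;> omega)
        (by simp only [Bool.false_eq_true, if_false] at he; rw [he]; simp)
    by_cases ht : tB h k = tB h k'
    · have hcases : (∃ a s, a + s + 1 = h ∧ k = 2 * a ∧ k' = 2 * h + 1 + 2 * s) ∨
          (∃ a s, a + s + 1 = h ∧ k = 2 * a + 1 ∧ k' = 2 * h + 2 + 2 * s) ∨
          (k = 2 * h ∧ k' = 4 * h + 1) := by
        by_cases c1 : k = 2 * h
        · right; right
          refine ⟨c1, ?_⟩
          unfold tB at ht; split_ifs at ht <;> omega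
        · by_cases c2 : k % 2 = 0
          · left
            refine ⟨k / 2, h - 1 - k / 2, ?_⟩
            unfold tB at ht; split_ifs at ht <;> omega
          · right; left
            refine ⟨k / 2, h - 1 - k / 2, ?_⟩
            unfold tB at ht; split_ifs at ht <;> omega
      have bq := hρ i j (2 * h)
      have bq' := hρ i' j' (2 * h)
      rcases hcases with ⟨a, s, has, rfl, rfl⟩ | ⟨a, s, has, rfl, rfl⟩ | ⟨rfl, rfl⟩
      · have e : ∀ i j, v i j (2 * h + 1 + 2 * s) - v i j (2 * a) =
            (labB h (2 * h) * N + 1 + ρ i j (2 * h)) + (if s = 0 then (0 : ℤ) else 2 * N)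
            + (labB h (2 * a) * N + 1 + ρ i j (2 * a))
            - (labB h (2 * a + 1) * N + 1 + ρ i j (2 * a + 1)) := by
          intro i j
          have f1 := hS i j s (a + 1) (by omega)
          have f2 := hvs i j (2 * a)
          have f3 := hvs i j (2 * a + 1)
          rw [sE0 a (by omega)] at f2
          rw [sE1 a (by omega)] at f3
          rw [show 2 * (a + 1) = 2 * a + 1 + 1 by ring] at f1
          linear_combination f1 + f2 + f3
        rw [e i j, e i' j'] at hdvd
        have b := hρ i j (2 * a + 1)
        have b' := hρ i' j' (2 * a + 1)
        have := Int.eq_zero_of_abs_lt_dvd hdvd (by rw [abs_lt]; constructor <;> linarith)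
        exact sep (2 * h) (2 * a + 1) (by omega) (by omega) (by omega) (by linarith)
      · have e : ∀ i j, v i j (2 * h + 2 + 2 * s) - v i j (2 * a + 1) =
            (labB h (2 * h) * N + 1 + ρ i j (2 * h)) + (if s = 0 then (0 : ℤ) else 2 * N)
            + (labB h (2 * h + 1 + 2 * s) * N + 1 + ρ i j (2 * h + 1 + 2 * s))
            - (labB h (2 * a + 1) * N + 1 + ρ i j (2 * a + 1)) := by
          intro i j
          have f1 := hS i j s (a + 1) (by omega)
          have f2 := hvs i j (2 * h + 1 + 2 * s)
          have f3 := hvs i j (2 * a + 1)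
          rw [sF0] at f2
          rw [sE1 a (by omega)] at f3
          rw [show 2 * (a + 1) = 2 * a + 1 + 1 by ring] at f1
          rw [show 2 * h + 1 + 2 * s + 1 = 2 * h + 2 + 2 * s by ring] at f2
          linear_combination f1 + f2 + f3
        rw [e i j, e i' j'] at hdvd
        have b := hρ i j (2 * h + 1 + 2 * s)
        have b' := hρ i' j' (2 * h + 1 + 2 * s)
        have := Int.eq_zero_of_abs_lt_dvd hdvd (by rw [abs_lt]; constructor <;> linarith)
        have g := r0 i j a s has
        have g' := r0 i' j' a s has
        exact sep (2 * h) (2 * a) (by omega) (by omega) (by omega) (by linarith)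
      · rw [hq1, hq1, h1] at hdvd
        have b := hb1 i j (2 * h) le_rfl
        have b' := hb1 i' j' (2 * h) le_rfl
        have := Int.eq_zero_of_abs_lt_dvd hdvd (by rw [abs_lt]; constructor <;> linarith)
        have g := hmod i j h le_rfl
        have g' := hmod i' j' h le_rfl
        have e : v i j (2 * h) = v i' j' (2 * h) := by linarith
        rw [e] at g
        refine mul_sep (a := h) (b := 0) hm hi hi' hne (by omega) (by omega) (by omega) ?_
        obtain ⟨x, hx⟩ := dvd_sub g' g
        refine ⟨x, ?_⟩
        rw [Nat.cast_zero]
        linear_combination hx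
    · exact rr_sep (j := j) (j' := j') (t := tB h k) (t' := tB h k') hm hi hi' hne
        (tb k hk) (tb k' hk') ht (by rw [res_eq h1, res_eq h2]; simp)

/-- Main theorem: if `ℓ ≥ 4` is even, `n ≡ 1 (mod 2ℓ)` and `N = (n-1)/(2ℓ)`, then there
is a set of mutually orthogonal cyclic `ℓ`-cycle systems of `K_n` of cardinality at least
`N/(aℓ+b) - 1`, where `(a,b) = (4,-2)` if `ℓ ≡ 0 (mod 4)` and `(a,b) = (24,-18)` if
`ℓ ≡ 2 (mod 4)`; in particular `μ(ℓ,n) ≥ μ'(ℓ,n) ≥ N/(aℓ+b) - 1`. -/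
theorem stmt_1 (ℓ n N : ℕ) (hℓ : 4 ≤ ℓ) (heven : ℓ % 2 = 0)
    (hn : n % (2 * ℓ) = 1) (hN : N = (n - 1) / (2 * ℓ)) :
    ∃ S : Set (Set (Finset (Sym2 (ZMod n)))),
      (∀ F ∈ S, IsCycleSystem ℓ F ∧ IsCyclicSystem F) ∧
      S.Pairwise Orthog ∧
      (N : ℝ) / (if ℓ % 4 = 0 then 4 * (ℓ : ℝ) - 2 else 24 * (ℓ : ℝ) - 18) - 1 ≤ S.ncard := by
  have hn1 : n = 2 * ℓ * N + 1 := by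
    have := Nat.div_add_mod n (2 * ℓ)
    have h2 : (n - 1) / (2 * ℓ) = n / (2 * ℓ) := by
      rw [hn] at this
      conv_lhs => rw [← this]
      rw [Nat.add_sub_cancel, Nat.mul_div_cancel_left _ (by omega)]
    rw [hN, h2]; omega
  clear hN hn
  have hbound : ∀ c : ℝ, (ℓ : ℝ) ≤ c → (N : ℝ) / c - 1 ≤ ((N / ℓ : ℕ) : ℝ) := by
    intro c hc
    have hl : (0 : ℝ) < ℓ := by exact_mod_cast (by omega : 0 < ℓ)
    have h1 : (N : ℝ) / c ≤ N / ℓ := div_le_div_of_nonneg_left (by positivity) hl hc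
    have h2 : (N : ℝ) / ℓ ≤ ((N / ℓ : ℕ) : ℝ) + 1 := by
      rw [div_le_iff₀ hl]
      have := Nat.div_add_mod N ℓ
      have h3 := Nat.mod_lt N (show ℓ > 0 by omega)
      have : N ≤ (N / ℓ + 1) * ℓ := by nlinarith
      exact_mod_cast this
    linarith
  have hc : (ℓ : ℝ) ≤ (if ℓ % 4 = 0 then 4 * (ℓ : ℝ) - 2 else 24 * (ℓ : ℝ) - 18) := by
    have : (4 : ℝ) ≤ ℓ := by exact_mod_cast hℓ
    split_ifs <;> linarith
  have hb := hbound _ hc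
  suffices h : ∃ S : Set (Set (Finset (Sym2 (ZMod n)))),
      (∀ F ∈ S, IsCycleSystem ℓ F ∧ IsCyclicSystem F) ∧
      S.Pairwise Orthog ∧ S.ncard = N / ℓ by
    obtain ⟨S, h1, h2, h3⟩ := h
    exact ⟨S, h1, h2, by rw [h3]; exact hb⟩
  rcases Nat.eq_zero_or_pos N with h0 | h0
  · exact ⟨∅, by simp, by simp, by simp [h0]⟩
  have hm : N / ℓ * ℓ ≤ N := Nat.div_mul_le_self N ℓ
  generalize N / ℓ = m at hm
  by_cases h4 : ℓ % 4 = 0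
  · obtain ⟨h, rfl⟩ : ∃ h, ℓ = 4 * h := ⟨ℓ / 4, by omega⟩
    exact caseA (by omega) h0 hn1 hm
  · obtain ⟨h, rfl⟩ : ∃ h, ℓ = 4 * h + 2 := ⟨ℓ / 4, by omega⟩
    exact caseB (by omega) h0 hn1 hm
end
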